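/- arXiv:hep-th/0304246 — 4 statements merged into one kernel-verified Lean document; each statement's English description precedes it below -/
import Mathlib

section
/- Triangular decomposition: for any generalized Cartan matrix A of size k, the Kac–Moody algebra g(A) over ℚ decomposes as an internal direct sum of ℚ-subspaces g(A) = N₋ ⊕ H ⊕ N₊, where N₊ is the Lie subalgebra generated by e_1,…,e_k, N₋ is the Lie subalgebra generated by f_1,…,f_k, and H is the linear span of h_1,…,h_k; moreover h_1,…,h_k are linearly independent, so dim H = k. -/
noncomputable section

open CartanMatrix

/-- A generalized Cartan matrix: `A i i = 2`, off-diagonal entries are non-positive, and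
`A i j = 0 ↔ A j i = 0`. -/
def IsGCM {B : Type*} (A : Matrix B B ℤ) : Prop :=
  (∀ i, A i i = 2) ∧ (∀ i j, i ≠ j → A i j ≤ 0) ∧ (∀ i j, A i j = 0 ↔ A j i = 0)

/-- The images in the Kac–Moody algebra `Matrix.ToLieAlgebra ℚ A` of the generators of the
free Lie algebra. -/
def KMgen {B : Type*} [DecidableEq B] (A : Matrix B B ℤ) (x : Generators B) :
    Matrix.ToLieAlgebra ℚ A :=
  LieSubmodule.Quotient.mk (N := Relations.toIdeal ℚ A) (FreeLieAlgebra.of ℚ x)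

/-- The Cartan generator `h i`. -/
def gH {B : Type*} [DecidableEq B] (A : Matrix B B ℤ) (i : B) : Matrix.ToLieAlgebra ℚ A :=
  KMgen A (Generators.H i)

/-- The raising generator `e i`. -/
def gE {B : Type*} [DecidableEq B] (A : Matrix B B ℤ) (i : B) : Matrix.ToLieAlgebra ℚ A :=
  KMgen A (Generators.E i)

/-- The lowering generator `f i`. -/
def gF {B : Type*} [DecidableEq B] (A : Matrix B B ℤ) (i : B) : Matrix.ToLieAlgebra ℚ A :=
  KMgen A (Generators.F i)

set_option linter.unusedSectionVars false
section general
variable {ι : Type*} [DecidableEq ι] {L : Type*} [LieRing L] [LieAlgebra ℚ L]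

lemma km_wt (A : Matrix ι ι ℤ) (f h : ι → L)
    (hHF : ∀ i j, ⁅h i, f j⁆ = -((A i j : ℚ) • f j)) (k i j : ι) (m : ℕ) :
    ⁅h k, ((LieAlgebra.ad ℚ L (f i)) ^ m) (f j)⁆ =
      (-(m * A k i : ℚ) - A k j) • ((LieAlgebra.ad ℚ L (f i)) ^ m) (f j) := by
  induction m with
  | zero => simp [hHF]
  | succ m ih =>
    rw [pow_succ', Module.End.mul_apply, LieAlgebra.ad_apply, leibniz_lie, ih, hHF]
    simp only [neg_lie, smul_lie, lie_smul]
    rw [← neg_smul, ← add_smul]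
    congr 1
    push_cast; ring

lemma km_ei (A : Matrix ι ι ℤ) (hA : ∀ i, A i i = 2) (e f h : ι → L)
    (hEF : ∀ i j, ⁅e i, f j⁆ = if i = j then h i else 0)
    (hHF : ∀ i j, ⁅h i, f j⁆ = -((A i j : ℚ) • f j)) (i j : ι) (hij : i ≠ j) (m : ℕ) :
    ⁅e i, ((LieAlgebra.ad ℚ L (f i)) ^ (m+1)) (f j)⁆ =
      ((m + 1 : ℚ) * (-A i j - m)) • ((LieAlgebra.ad ℚ L (f i)) ^ m) (f j) := by
  induction m with
  | zero => simp [hEF, hij, hHF, leibniz_lie]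
  | succ m ih =>
    rw [pow_succ', Module.End.mul_apply, LieAlgebra.ad_apply, leibniz_lie, ih, hEF, if_pos rfl,
      km_wt A f h hHF, lie_smul, ← LieAlgebra.ad_apply ℚ L (f i), ← Module.End.mul_apply,
      ← pow_succ', ← add_smul, hA]
    congr 1
    push_cast; ring

lemma km_serre (A : Matrix ι ι ℤ) (hA : ∀ i, A i i = 2) (hA' : ∀ i j, i ≠ j → A i j ≤ 0)
    (hA'' : ∀ i j, A i j = 0 ↔ A j i = 0) (e f h : ι → L)
    (hEF : ∀ i j, ⁅e i, f j⁆ = if i = j then h i else 0)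
    (hHF : ∀ i j, ⁅h i, f j⁆ = -((A i j : ℚ) • f j)) (k i j : ι) :
    ⁅e k, ((LieAlgebra.ad ℚ L (f i)) ^ (-A i j).toNat) ⁅f i, f j⁆⁆ = 0 := by
  by_cases hij : i = j
  · subst hij; simp
  have e1 : ((LieAlgebra.ad ℚ L (f i)) ^ (-A i j).toNat) ⁅f i, f j⁆ =
      ((LieAlgebra.ad ℚ L (f i)) ^ ((-A i j).toNat + 1)) (f j) := by
    rw [pow_succ, Module.End.mul_apply, LieAlgebra.ad_apply]
  rw [e1]
  by_cases hki : k = i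
  · subst hki
    rw [km_ei A hA e f h hEF hHF k j hij]
    have := hA' k j hij
    have h2 : (((-A k j).toNat : ℤ) : ℚ) = ((-A k j : ℤ) : ℚ) := by
      congr 1; omega
    have h3 : (((-A k j).toNat : ℕ) : ℚ) = -(A k j : ℚ) := by
      rw [← Int.cast_natCast, h2]; push_cast; rfl
    rw [h3]; simp
  have comm : ∀ m : ℕ, ⁅e k, ((LieAlgebra.ad ℚ L (f i)) ^ m) (f j)⁆ =
      ((LieAlgebra.ad ℚ L (f i)) ^ m) ⁅e k, f j⁆ := by
    intro m
    induction m with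
    | zero => simp
    | succ m ih =>
      rw [pow_succ', Module.End.mul_apply, LieAlgebra.ad_apply, leibniz_lie, ih, hEF, if_neg hki]
      simp
  rw [comm, hEF]
  by_cases hkj : k = j
  · subst hkj
    rw [if_pos rfl]
    have h1 : (LieAlgebra.ad ℚ L (f i)) (h k) = (A k i : ℚ) • f i := by
      rw [LieAlgebra.ad_apply, ← lie_skew, hHF]; simp
    rw [pow_succ, Module.End.mul_apply, h1]
    by_cases h0 : A i k = 0
    · rw [(hA'' i k).1 h0]; simp
    · obtain ⟨n, hn⟩ : ∃ n, (-A i k).toNat = n + 1 :=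
        ⟨(-A i k).toNat - 1, by have := hA' i k hij; omega⟩
      rw [hn, pow_succ, Module.End.mul_apply]; simp
  · simp [hkj]

/-- Closure step used for the spanning part. -/
lemma km_h_stable (f : ι → L) (x : L)
    (hx : ∀ j, ∃ c : ℚ, ⁅x, f j⁆ = c • f j) (y : L)
    (hy : y ∈ LieSubalgebra.lieSpan ℚ L (Set.range f)) :
    ⁅x, y⁆ ∈ LieSubalgebra.lieSpan ℚ L (Set.range f) := by
  induction hy using LieSubalgebra.lieSpan_induction with
  | mem y hy =>
    obtain ⟨j, rfl⟩ := hy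
    obtain ⟨c, hc⟩ := hx j
    rw [hc]
    exact LieSubalgebra.smul_mem _ _ (LieSubalgebra.subset_lieSpan ⟨j, rfl⟩)
  | zero => simp
  | smul c y _ ih => rw [lie_smul]; exact LieSubalgebra.smul_mem _ _ ih
  | add y z _ _ h1 h2 => rw [lie_add]; exact add_mem h1 h2
  | lie y z hy hz h1 h2 =>
    rw [leibniz_lie]
    exact add_mem (LieSubalgebra.lie_mem _ h1 hz) (LieSubalgebra.lie_mem _ hy h2)

lemma km_e_stable (f h : ι → L)
    (hh : ∀ i j, ∃ c : ℚ, ⁅h i, f j⁆ = c • f j) (x : L)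
    (hx : ∀ j, ⁅x, f j⁆ ∈ Submodule.span ℚ (Set.range h)) (y : L)
    (hy : y ∈ LieSubalgebra.lieSpan ℚ L (Set.range f)) :
    ⁅x, y⁆ ∈ Submodule.span ℚ (Set.range h) ⊔
      (LieSubalgebra.lieSpan ℚ L (Set.range f)).toSubmodule := by
  have key : ∀ u ∈ Submodule.span ℚ (Set.range h) ⊔
      (LieSubalgebra.lieSpan ℚ L (Set.range f)).toSubmodule,
      ∀ v ∈ LieSubalgebra.lieSpan ℚ L (Set.range f),
      ⁅u, v⁆ ∈ LieSubalgebra.lieSpan ℚ L (Set.range f) := by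
    intro u hu v hv
    obtain ⟨a, ha, b, hb, rfl⟩ := Submodule.mem_sup.1 hu
    rw [add_lie]
    refine add_mem ?_ (LieSubalgebra.lie_mem _ hb hv)
    clear hu
    induction ha using Submodule.span_induction with
    | mem a ha => obtain ⟨i, rfl⟩ := ha; exact km_h_stable f _ (hh i) v hv
    | zero => simp
    | smul c y _ ih => rw [smul_lie]; exact LieSubalgebra.smul_mem _ _ ih
    | add y z _ _ h1 h2 => rw [add_lie]; exact add_mem h1 h2
  induction hy using LieSubalgebra.lieSpan_induction with
  | mem y hy =>
    obtain ⟨j, rfl⟩ := hy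
    exact Submodule.mem_sup_left (hx j)
  | zero => simp
  | smul c y _ ih => rw [lie_smul]; exact Submodule.smul_mem _ _ ih
  | add y z _ _ h1 h2 => rw [lie_add]; exact add_mem h1 h2
  | lie y z hy hz h1 h2 =>
    rw [leibniz_lie]
    refine Submodule.mem_sup_right (add_mem (key _ h1 _ hz) ?_)
    rw [← lie_skew]
    exact neg_mem (key _ h2 _ hy)

/-- Products of eigenvectors: the sum of eigenspaces indexed by a multiplicatively closed set
contains the Lie subalgebra generated by eigenvectors. -/
lemma km_eig (σ : Module.End ℚ L) (hσ : ∀ x y, σ ⁅x, y⁆ = ⁅σ x, σ y⁆) (s : Set ℚ)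
    (hs : ∀ a ∈ s, ∀ b ∈ s, a * b ∈ s) (f : ι → L) (c : ℚ) (hc : c ∈ s)
    (hf : ∀ i, σ (f i) = c • f i) :
    (LieSubalgebra.lieSpan ℚ L (Set.range f)).toSubmodule ≤ ⨆ μ ∈ s, σ.eigenspace μ := by
  have hmem : ∀ μ ∈ s, ∀ x, σ x = μ • x → x ∈ ⨆ μ ∈ s, σ.eigenspace μ := by
    intro μ hμ x hx
    exact (le_biSup σ.eigenspace hμ) (Module.End.mem_eigenspace_iff.2 hx)
  intro y hy
  change y ∈ LieSubalgebra.lieSpan ℚ L (Set.range f) at hy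
  induction hy using LieSubalgebra.lieSpan_induction with
  | mem y hy => obtain ⟨i, rfl⟩ := hy; exact hmem c hc _ (hf i)
  | zero => simp
  | smul c y _ ih => exact Submodule.smul_mem _ _ ih
  | add y z _ _ h1 h2 => exact add_mem h1 h2
  | lie y z hy hz h1 h2 =>
    clear hy hz
    induction h1 using Submodule.iSup_induction' with
    | zero => simp
    | add a b _ _ iha ihb => rw [add_lie]; exact add_mem iha ihb
    | mem μ a ha =>
      by_cases hμ : μ ∈ s
      swap
      · simp [hμ] at ha; simp [ha]
      simp only [hμ, iSup_pos] at ha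
      rw [Module.End.mem_eigenspace_iff] at ha
      induction h2 using Submodule.iSup_induction' with
      | zero => simp
      | add a b _ _ iha ihb => rw [lie_add]; exact add_mem iha ihb
      | mem ν b hb =>
        by_cases hν : ν ∈ s
        swap
        · simp [hν] at hb; simp [hb]
        simp only [hν, iSup_pos] at hb
        rw [Module.End.mem_eigenspace_iff] at hb
        refine hmem (μ * ν) (hs _ hμ _ hν) _ ?_
        rw [hσ, ha, hb, smul_lie, lie_smul, smul_smul]
end general
section rep
open CartanMatrix
variable {ι : Type*} [DecidableEq ι]


/-- The underlying space of the Verma-type module. -/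
abbrev KMT (ι : Type*) := List ι →₀ ℚ

instance kmEndLieRing : LieRing (Module.End ℚ (KMT ι)) := LieRing.ofAssociativeRing

instance kmEndLieAlgebra : LieAlgebra ℚ (Module.End ℚ (KMT ι)) :=
  LieAlgebra.ofAssociativeAlgebra

/-- Weight of a word. -/
def kmWt (A : Matrix ι ι ℤ) (l : ι → ℚ) (i : ι) : List ι → ℚ
  | [] => l i
  | j :: w => kmWt A l i w - A i j

/-- Lowering operator. -/
def kmF (i : ι) : Module.End ℚ (KMT ι) := Finsupp.lmapDomain ℚ ℚ (List.cons i)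

/-- Cartan operator. -/
def kmH (A : Matrix ι ι ℤ) (l : ι → ℚ) (i : ι) : Module.End ℚ (KMT ι) :=
  Finsupp.linearCombination ℚ (fun w => kmWt A l i w • (Finsupp.single w (1 : ℚ) : KMT ι))

/-- Raising operator on words. -/
def kmEb (A : Matrix ι ι ℤ) (l : ι → ℚ) (i : ι) : List ι → KMT ι
  | [] => 0
  | j :: w => kmF j (kmEb A l i w) +
      if i = j then kmWt A l i w • (Finsupp.single w (1 : ℚ) : KMT ι) else 0

/-- Raising operator. -/
def kmE (A : Matrix ι ι ℤ) (l : ι → ℚ) (i : ι) : Module.End ℚ (KMT ι) :=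
  Finsupp.linearCombination ℚ (kmEb A l i)

lemma kmF_b (i : ι) (w : List ι) :
    kmF i (Finsupp.single w (1 : ℚ)) = Finsupp.single (i :: w) 1 := by
  simp [kmF]

lemma kmH_b (A : Matrix ι ι ℤ) (l : ι → ℚ) (i : ι) (w : List ι) :
    kmH A l i (Finsupp.single w (1 : ℚ)) = kmWt A l i w • Finsupp.single w 1 := by
  rw [kmH, Finsupp.linearCombination_single, one_smul]

lemma kmE_b (A : Matrix ι ι ℤ) (l : ι → ℚ) (i : ι) (w : List ι) :
    kmE A l i (Finsupp.single w (1 : ℚ)) = kmEb A l i w := by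
  rw [kmE, Finsupp.linearCombination_single, one_smul]

lemma km_ext {X Y : Module.End ℚ (KMT ι)}
    (h : ∀ w, X (Finsupp.single w 1) = Y (Finsupp.single w 1)) : X = Y :=
  Finsupp.lhom_ext' fun w => LinearMap.ext_ring (h w)

lemma km_lie_apply (X Y : Module.End ℚ (KMT ι)) (v : KMT ι) :
    (⁅X, Y⁆ : Module.End ℚ (KMT ι)) v = X (Y v) - Y (X v) := rfl

lemma kmHF (A : Matrix ι ι ℤ) (l : ι → ℚ) (i j : ι) :
    ⁅kmH A l i, kmF j⁆ = -((A i j : ℚ) • kmF j) := by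
  apply km_ext
  intro w
  simp only [km_lie_apply, kmF_b, kmH_b, map_smul, kmWt, LinearMap.neg_apply,
    LinearMap.smul_apply]
  module

lemma kmHH (A : Matrix ι ι ℤ) (l : ι → ℚ) (i j : ι) :
    ⁅kmH A l i, kmH A l j⁆ = 0 := by
  apply km_ext
  intro w
  simp only [km_lie_apply, kmH_b, map_smul, LinearMap.zero_apply]
  module

lemma kmEF (A : Matrix ι ι ℤ) (l : ι → ℚ) (i j : ι) :
    ⁅kmE A l i, kmF j⁆ = if i = j then kmH A l i else 0 := by
  apply km_ext
  intro w
  simp only [km_lie_apply, kmF_b, kmE_b, kmEb]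
  split_ifs with h
  · simp [kmH_b]
  · simp

lemma kmHE (A : Matrix ι ι ℤ) (l : ι → ℚ) (i j : ι) :
    ⁅kmH A l i, kmE A l j⁆ = (A i j : ℚ) • kmE A l j := by
  apply km_ext
  intro w
  induction w with
  | nil => simp only [km_lie_apply, kmE_b, kmH_b, kmEb, map_smul, map_zero, smul_zero, sub_zero,
      LinearMap.smul_apply]
  | cons x w ih =>
    have hf : ∀ v, kmH A l i (kmF x v) = kmF x (kmH A l i v) - (A i x : ℚ) • kmF x v := by
      intro v
      have := congrArg (fun X : Module.End ℚ (KMT ι) => X v) (kmHF A l i x)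
      simp only [km_lie_apply, LinearMap.neg_apply, LinearMap.smul_apply] at this
      rw [sub_eq_iff_eq_add] at this
      rw [this]; abel
    simp only [km_lie_apply, kmH_b, map_smul, kmE_b, LinearMap.smul_apply, kmEb, kmWt,
      map_add, hf] at ih ⊢
    rw [sub_eq_iff_eq_add] at ih
    rw [ih]
    simp only [map_add, map_smul]
    split_ifs with h
    · subst h
      simp only [map_smul, kmH_b]
      module
    · simp only [map_zero]; module

/-- The lowering Serre element as an operator. -/
def kmTh (A : Matrix ι ι ℤ) (i j : ι) : Module.End ℚ (KMT ι) :=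
  ((LieAlgebra.ad ℚ (Module.End ℚ (KMT ι)) (kmF i)) ^ (-A i j).toNat) ⁅kmF i, kmF j⁆

/-- Spanning set of the submodule generated by the lowering Serre elements. -/
inductive KMInW (A : Matrix ι ι ℤ) : KMT ι → Prop
  | base (i j : ι) (b : KMT ι) : KMInW A (kmTh A i j b)
  | step (i : ι) (x : KMT ι) (h : KMInW A x) : KMInW A (kmF i x)

/-- The submodule generated by the lowering Serre elements. -/
def kmW (A : Matrix ι ι ℤ) : Submodule ℚ (KMT ι) := Submodule.span ℚ {x | KMInW A x}

lemma kmW_stable (A : Matrix ι ι ℤ) (X : Module.End ℚ (KMT ι))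
    (h : ∀ x, KMInW A x → X x ∈ kmW A) (x : KMT ι) (hx : x ∈ kmW A) : X x ∈ kmW A := by
  have : kmW A ≤ (kmW A).comap X := Submodule.span_le.2 h
  exact this hx

lemma kmW_F (A : Matrix ι ι ℤ) (i : ι) (x : KMT ι) (hx : x ∈ kmW A) : kmF i x ∈ kmW A :=
  kmW_stable A _ (fun x hx => Submodule.subset_span (KMInW.step i x hx)) x hx

lemma kmW_H (A : Matrix ι ι ℤ) (l : ι → ℚ) (i : ι) (x : KMT ι) (hx : x ∈ kmW A) :
    kmH A l i x ∈ kmW A := by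
  refine kmW_stable A _ (fun x hx => ?_) x hx
  clear * - hx
  induction hx with
  | base a b v =>
    have h1 := km_wt A kmF (kmH A l) (kmHF A l) i a b ((-A a b).toNat + 1)
    rw [pow_succ, Module.End.mul_apply, LieAlgebra.ad_apply] at h1
    have h2 := congrArg (fun X : Module.End ℚ (KMT ι) => X v) h1
    change kmH A l i (kmTh A a b v) - kmTh A a b (kmH A l i v) = (_ : ℚ) • kmTh A a b v at h2
    rw [sub_eq_iff_eq_add] at h2
    rw [h2]
    exact add_mem (Submodule.smul_mem _ _ (Submodule.subset_span (KMInW.base a b v)))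
      (Submodule.subset_span (KMInW.base a b _))
  | step j x hx ih =>
    have h2 := congrArg (fun X : Module.End ℚ (KMT ι) => X x) (kmHF A l i j)
    change kmH A l i (kmF j x) - kmF j (kmH A l i x) = -((A i j : ℚ) • kmF j x) at h2
    rw [sub_eq_iff_eq_add] at h2
    rw [h2]
    exact add_mem (neg_mem (Submodule.smul_mem _ _ (Submodule.subset_span (KMInW.step j x hx))))
      (kmW_F A j _ ih)

lemma kmW_E (A : Matrix ι ι ℤ) (hA : IsGCM A) (l : ι → ℚ) (i : ι) (x : KMT ι)
    (hx : x ∈ kmW A) : kmE A l i x ∈ kmW A := by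
  refine kmW_stable A _ (fun x hx => ?_) x hx
  clear * - hA hx
  induction hx with
  | base a b v =>
    have h1 := km_serre A hA.1 hA.2.1 hA.2.2 (kmE A l) kmF (kmH A l) (kmEF A l) (kmHF A l) i a b
    have h2 := congrArg (fun X : Module.End ℚ (KMT ι) => X v) h1
    change kmE A l i (kmTh A a b v) - kmTh A a b (kmE A l i v) = 0 at h2
    rw [sub_eq_zero] at h2
    rw [h2]
    exact Submodule.subset_span (KMInW.base a b _)
  | step j x hx ih =>
    have h2 := congrArg (fun X : Module.End ℚ (KMT ι) => X x) (kmEF A l i j)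
    change kmE A l i (kmF j x) - kmF j (kmE A l i x) = _ at h2
    rw [sub_eq_iff_eq_add] at h2
    rw [h2]
    refine add_mem ?_ (kmW_F A j _ ih)
    split_ifs
    · exact kmW_H A l i x (Submodule.subset_span hx)
    · exact Submodule.zero_mem _

lemma kmF_nil (i : ι) (x : KMT ι) : kmF i x [] = 0 := by
  rw [kmF, Finsupp.lmapDomain_apply]
  exact Finsupp.mapDomain_of_notMem_range x _ (by simp)

lemma kmW_nil (A : Matrix ι ι ℤ) (x : KMT ι) (hx : x ∈ kmW A) : x [] = 0 := by
  have : kmW A ≤ LinearMap.ker (Finsupp.lapply (R := ℚ) (M := ℚ) ([] : List ι)) := by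
    refine Submodule.span_le.2 fun x hx => ?_
    change x [] = 0
    induction hx with
    | step i x _ _ => exact kmF_nil i x
    | base i j b =>
      unfold kmTh
      generalize (-A i j).toNat = n
      induction n generalizing b with
      | zero =>
        change (kmF i (kmF j b) - kmF j (kmF i b)) [] = 0
        simp [kmF_nil]
      | succ n ih =>
        rw [pow_succ', Module.End.mul_apply, LieAlgebra.ad_apply, km_lie_apply,
          Finsupp.sub_apply, kmF_nil, ih, sub_zero]
  exact this hx

lemma kmThE (A : Matrix ι ι ℤ) (hA : IsGCM A) (l : ι → ℚ) (i j : ι) :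
    ((LieAlgebra.ad ℚ (Module.End ℚ (KMT ι)) (kmE A l i)) ^ (-A i j).toNat)
      ⁅kmE A l i, kmE A l j⁆ = 0 := by
  have comm := fun k => km_serre A hA.1 hA.2.1 hA.2.2 kmF (kmE A l) (fun i => - kmH A l i)
    (fun i j => by
      rw [← lie_skew, kmEF]
      by_cases h : i = j
      · subst h; simp
      · rw [if_neg h, if_neg (Ne.symm h), neg_zero])
    (fun i j => by rw [neg_lie, kmHE]) k i j
  have nil : ∀ n, (((LieAlgebra.ad ℚ (Module.End ℚ (KMT ι)) (kmE A l i)) ^ n)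
      ⁅kmE A l i, kmE A l j⁆) (Finsupp.single [] 1) = 0 := by
    intro n
    induction n with
    | zero =>
      change kmE A l i (kmE A l j _) - kmE A l j (kmE A l i _) = 0
      simp [kmE_b, kmEb]
    | succ n ih =>
      rw [pow_succ', Module.End.mul_apply, LieAlgebra.ad_apply, km_lie_apply, ih, kmE_b]
      simp [kmEb]
  replace nil := nil (-A i j).toNat
  generalize ((LieAlgebra.ad ℚ (Module.End ℚ (KMT ι)) (kmE A l i)) ^ (-A i j).toNat)
      ⁅kmE A l i, kmE A l j⁆ = X at comm nil
  apply km_ext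
  intro w
  induction w with
  | nil => simpa using nil
  | cons x w ih =>
    have h2 := congrArg (fun X : Module.End ℚ (KMT ι) => X (Finsupp.single w 1)) (comm x)
    change kmF x (X _) - X (kmF x _) = 0 at h2
    rw [sub_eq_zero, ih, kmF_b] at h2
    rw [← h2]; simp

/-- Images of the generators. -/
def kmRepGen (A : Matrix ι ι ℤ) (l : ι → ℚ) : Generators ι → Module.End ℚ (KMT ι)
  | .H i => kmH A l i
  | .E i => kmE A l i
  | .F i => kmF i

/-- The representation of the free Lie algebra. -/
def kmRep (A : Matrix ι ι ℤ) (l : ι → ℚ) :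
    FreeLieAlgebra ℚ (Generators ι) →ₗ⁅ℚ⁆ Module.End ℚ (KMT ι) :=
  FreeLieAlgebra.lift ℚ (kmRepGen A l)

lemma km_free_induction {X : Type*} (S : LieSubalgebra ℚ (FreeLieAlgebra ℚ X))
    (hS : ∀ x, FreeLieAlgebra.of ℚ x ∈ S) (y : FreeLieAlgebra ℚ X) : y ∈ S := by
  let g : FreeLieAlgebra ℚ X →ₗ⁅ℚ⁆ S := FreeLieAlgebra.lift ℚ (fun x => ⟨_, hS x⟩)
  have : S.incl.comp g = LieHom.id := by
    ext x
    simp [g]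
  have h2 := congrArg (fun u => u y) this
  change S.incl (g y) = y at h2
  rw [← h2]
  exact (g y).2

lemma kmRep_stable (A : Matrix ι ι ℤ) (hA : IsGCM A) (l : ι → ℚ)
    (y : FreeLieAlgebra ℚ (Generators ι)) (v : KMT ι) (hv : v ∈ kmW A) :
    kmRep A l y v ∈ kmW A := by
  let S : LieSubalgebra ℚ (FreeLieAlgebra ℚ (Generators ι)) :=
    { carrier := {y | ∀ v ∈ kmW A, kmRep A l y v ∈ kmW A}
      add_mem' := fun {a b} ha hb v hv => by
        rw [map_add]; exact add_mem (ha v hv) (hb v hv)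
      zero_mem' := fun v hv => by rw [map_zero]; exact Submodule.zero_mem _
      smul_mem' := fun c a ha v hv => by
        rw [map_smul]; exact Submodule.smul_mem _ _ (ha v hv)
      lie_mem' := fun {a b} ha hb v hv => by
        rw [LieHom.map_lie, km_lie_apply]
        exact sub_mem (ha _ (hb _ hv)) (hb _ (ha _ hv)) }
  refine km_free_induction S (fun x => ?_) y v hv
  intro v hv
  rw [kmRep, FreeLieAlgebra.lift_of_apply]
  cases x with
  | H i => exact kmW_H A l i v hv
  | E i => exact kmW_E A hA l i v hv
  | F i => exact kmW_F A i v hv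

lemma km_hom_adpow {L M : Type*} [LieRing L] [LieAlgebra ℚ L] [LieRing M] [LieAlgebra ℚ M]
    (g : L →ₗ⁅ℚ⁆ M) (x y : L) (n : ℕ) :
    g (((LieAlgebra.ad ℚ L x) ^ n) y) = ((LieAlgebra.ad ℚ M (g x)) ^ n) (g y) := by
  induction n with
  | zero => simp
  | succ n ih =>
    rw [pow_succ', Module.End.mul_apply, LieAlgebra.ad_apply, LieHom.map_lie, ih, pow_succ',
      Module.End.mul_apply, LieAlgebra.ad_apply]

/-- The annihilator ideal of the quotient module. -/
def kmK (A : Matrix ι ι ℤ) (hA : IsGCM A) (l : ι → ℚ) :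
    LieIdeal ℚ (FreeLieAlgebra ℚ (Generators ι)) :=
  { carrier := {y | ∀ v, kmRep A l y v ∈ kmW A}
    add_mem' := fun {a b} ha hb v => by
      rw [map_add]; exact add_mem (ha v) (hb v)
    zero_mem' := fun v => by rw [map_zero]; exact Submodule.zero_mem _
    smul_mem' := fun c a ha v => by
      rw [map_smul]; exact Submodule.smul_mem _ _ (ha v)
    lie_mem := fun {a b} hb v => by
      rw [LieHom.map_lie, km_lie_apply]
      exact sub_mem (kmRep_stable A hA l _ _ (hb _)) (hb _) }

lemma kmK_le (A : Matrix ι ι ℤ) (hA : IsGCM A) (l : ι → ℚ) :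
    Relations.toIdeal ℚ A ≤ kmK A hA l := by
  have of_zero : ∀ y, kmRep A l y = 0 → y ∈ kmK A hA l := by
    intro y hy v
    rw [hy]; exact Submodule.zero_mem _
  have rH : ∀ i, kmRep A l (FreeLieAlgebra.of ℚ (Generators.H i)) = kmH A l i :=
    fun i => FreeLieAlgebra.lift_of_apply _ _
  have rE : ∀ i, kmRep A l (FreeLieAlgebra.of ℚ (Generators.E i)) = kmE A l i :=
    fun i => FreeLieAlgebra.lift_of_apply _ _
  have rF : ∀ i, kmRep A l (FreeLieAlgebra.of ℚ (Generators.F i)) = kmF i :=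
    fun i => FreeLieAlgebra.lift_of_apply _ _
  refine LieSubmodule.lieSpan_le.2 ?_
  rintro y (((((⟨⟨i, j⟩, rfl⟩ | ⟨⟨i, j⟩, rfl⟩) | ⟨⟨i, j⟩, rfl⟩) | ⟨⟨i, j⟩, rfl⟩) |
    ⟨⟨i, j⟩, rfl⟩) | ⟨⟨i, j⟩, rfl⟩)
  · apply of_zero
    simp only [Relations.HH, Function.uncurry_apply_pair, Function.comp_apply, LieHom.map_lie, rH,
      kmHH]
  · apply of_zero
    simp only [Relations.EF, Function.uncurry_apply_pair, Function.comp_apply]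
    by_cases h : i = j
    · subst h
      simp only [if_true, map_sub, LieHom.map_lie, rH, rE, rF, kmEF, sub_self]
    · simp only [if_neg h, LieHom.map_lie, rE, rF, kmEF]
  · apply of_zero
    simp only [Relations.HE, Function.uncurry_apply_pair, Function.comp_apply, map_sub,
      LieHom.map_lie, map_smul, rH, rE, kmHE, ← Int.cast_smul_eq_zsmul ℚ, sub_self]
  · apply of_zero
    simp only [Relations.HF, Function.uncurry_apply_pair, Function.comp_apply, map_add,
      LieHom.map_lie, map_smul, rH, rF, kmHF, ← Int.cast_smul_eq_zsmul ℚ, neg_add_cancel]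
  · apply of_zero
    simp only [Relations.adE, Function.uncurry_apply_pair, Function.comp_apply, km_hom_adpow,
      LieHom.map_lie, rE]
    exact kmThE A hA l i j
  · intro v
    simp only [Relations.adF, Function.uncurry_apply_pair, Function.comp_apply, km_hom_adpow,
      LieHom.map_lie, rF]
    exact Submodule.subset_span (KMInW.base i j v)

/-- The quotient map as a Lie algebra morphism. -/
def kmPi (A : Matrix ι ι ℤ) : FreeLieAlgebra ℚ (Generators ι) →ₗ⁅ℚ⁆ Matrix.ToLieAlgebra ℚ A :=
  { toFun := fun x => LieSubmodule.Quotient.mk (N := Relations.toIdeal ℚ A) x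
    map_add' := fun _ _ => rfl
    map_smul' := fun _ _ => rfl
    map_lie' := rfl }

lemma kmPi_surj (A : Matrix ι ι ℤ) : Function.Surjective (kmPi A) := Quot.mk_surjective

lemma kmPi_ker (A : Matrix ι ι ℤ) (x) : kmPi A x = 0 ↔ x ∈ Relations.toIdeal ℚ A :=
  LieSubmodule.Quotient.mk_eq_zero' (N := Relations.toIdeal ℚ A)

lemma km_linInd [Fintype ι] (A : Matrix ι ι ℤ) (hA : IsGCM A) : LinearIndependent ℚ (gH A) := by
  rw [Fintype.linearIndependent_iff]
  intro c hc i
  have h1 : kmPi A (∑ j, c j • FreeLieAlgebra.of ℚ (Generators.H j)) = 0 := by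
    rw [← hc, map_sum]
    refine Finset.sum_congr rfl fun j _ => ?_
    rw [map_smul]; rfl
  have h2 := kmK_le A hA (Pi.single i 1) ((kmPi_ker A _).1 h1) (Finsupp.single [] 1)
  have h3 := kmW_nil A _ h2
  rw [map_sum, LinearMap.sum_apply, Finsupp.finsetSum_apply] at h3
  have h4 : ∀ j, kmRep A (Pi.single i 1) (c j • FreeLieAlgebra.of ℚ (Generators.H j))
      (Finsupp.single [] 1) [] = c j * (Pi.single i 1 : ι → ℚ) j := by
    intro j
    have rH : kmRep A (Pi.single i 1) (FreeLieAlgebra.of ℚ (Generators.H j))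
      = kmH A (Pi.single i 1) j := FreeLieAlgebra.lift_of_apply _ _
    rw [map_smul, rH, LinearMap.smul_apply, kmH_b]
    simp [kmWt]
  simp only [h4] at h3
  simpa [Pi.single_apply] using h3

end rep
section final
open CartanMatrix
variable {ι : Type*} [DecidableEq ι]

lemma km_rel (A : Matrix ι ι ℤ) {y} (h : y ∈ Relations.toSet ℚ A) : kmPi A y = 0 :=
  (kmPi_ker A y).2 (LieSubmodule.subset_lieSpan h)

lemma gHH (A : Matrix ι ι ℤ) (i j : ι) : ⁅gH A i, gH A j⁆ = 0 :=
  km_rel A (y := Relations.HH ℚ (i, j)) (by simp [Relations.toSet])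

lemma gEF (A : Matrix ι ι ℤ) (i j : ι) : ⁅gE A i, gF A j⁆ = if i = j then gH A i else 0 := by
  have h := km_rel A (y := Relations.EF ℚ (i, j)) (by simp [Relations.toSet])
  simp only [Relations.EF, Function.uncurry_apply_pair, Function.comp_apply] at h
  split_ifs with hij
  · subst hij
    rw [if_pos rfl, map_sub, sub_eq_zero] at h
    exact h
  · rw [if_neg hij] at h
    exact h

lemma gHE (A : Matrix ι ι ℤ) (i j : ι) : ⁅gH A i, gE A j⁆ = (A i j : ℚ) • gE A j := by
  have h := km_rel A (y := Relations.HE ℚ A (i, j)) (by simp [Relations.toSet])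
  simp only [Relations.HE, Function.uncurry_apply_pair, Function.comp_apply, map_sub, map_zsmul,
    sub_eq_zero] at h
  rw [Int.cast_smul_eq_zsmul]
  exact h

lemma gHF (A : Matrix ι ι ℤ) (i j : ι) : ⁅gH A i, gF A j⁆ = -((A i j : ℚ) • gF A j) := by
  have h := km_rel A (y := Relations.HF ℚ A (i, j)) (by simp [Relations.toSet])
  simp only [Relations.HF, Function.uncurry_apply_pair, Function.comp_apply, map_add, map_zsmul,
    add_eq_zero_iff_eq_neg] at h
  rw [Int.cast_smul_eq_zsmul]
  exact h

lemma gadE (A : Matrix ι ι ℤ) (i j : ι) :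
    ((LieAlgebra.ad ℚ _ (gE A i)) ^ (-A i j).toNat) ⁅gE A i, gE A j⁆ = 0 := by
  have h := km_rel A (y := Relations.adE ℚ A (i, j)) (by simp [Relations.toSet])
  simp only [Relations.adE, Function.uncurry_apply_pair, Function.comp_apply, km_hom_adpow] at h
  exact h

lemma gadF (A : Matrix ι ι ℤ) (i j : ι) :
    ((LieAlgebra.ad ℚ _ (gF A i)) ^ (-A i j).toNat) ⁅gF A i, gF A j⁆ = 0 := by
  have h := km_rel A (y := Relations.adF ℚ A (i, j)) (by simp [Relations.toSet])
  simp only [Relations.adF, Function.uncurry_apply_pair, Function.comp_apply, km_hom_adpow] at h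
  exact h

/-- Images of generators under the grading automorphism. -/
def kmSigGen (A : Matrix ι ι ℤ) : Generators ι → Matrix.ToLieAlgebra ℚ A
  | .H i => gH A i
  | .E i => (2 : ℚ) • gE A i
  | .F i => (2⁻¹ : ℚ) • gF A i

/-- The grading morphism on the free Lie algebra. -/
def kmSig' (A : Matrix ι ι ℤ) :
    FreeLieAlgebra ℚ (Generators ι) →ₗ⁅ℚ⁆ Matrix.ToLieAlgebra ℚ A :=
  FreeLieAlgebra.lift ℚ (kmSigGen A)

lemma kmSig'_le (A : Matrix ι ι ℤ) : Relations.toIdeal ℚ A ≤ (kmSig' A).ker := by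
  have rH : ∀ i, kmSig' A (FreeLieAlgebra.of ℚ (Generators.H i)) = gH A i :=
    fun i => FreeLieAlgebra.lift_of_apply _ _
  have rE : ∀ i, kmSig' A (FreeLieAlgebra.of ℚ (Generators.E i)) = (2 : ℚ) • gE A i :=
    fun i => FreeLieAlgebra.lift_of_apply _ _
  have rF : ∀ i, kmSig' A (FreeLieAlgebra.of ℚ (Generators.F i)) = (2⁻¹ : ℚ) • gF A i :=
    fun i => FreeLieAlgebra.lift_of_apply _ _
  refine LieSubmodule.lieSpan_le.2 ?_
  rintro y (((((⟨⟨i, j⟩, rfl⟩ | ⟨⟨i, j⟩, rfl⟩) | ⟨⟨i, j⟩, rfl⟩) | ⟨⟨i, j⟩, rfl⟩) |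
    ⟨⟨i, j⟩, rfl⟩) | ⟨⟨i, j⟩, rfl⟩)
  all_goals rw [SetLike.mem_coe, LieHom.mem_ker]
  · simp only [Relations.HH, Function.uncurry_apply_pair, Function.comp_apply, LieHom.map_lie, rH,
      gHH]
  · simp only [Relations.EF, Function.uncurry_apply_pair, Function.comp_apply]
    by_cases h : i = j
    · subst h
      simp [LieHom.map_lie, rH, rE, rF, gEF]
    · simp [if_neg h, LieHom.map_lie, rE, rF, gEF]
  · simp only [Relations.HE, Function.uncurry_apply_pair, Function.comp_apply, map_sub,
      LieHom.map_lie, map_smul, rH, rE, gHE, ← Int.cast_smul_eq_zsmul ℚ, lie_smul]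
    module
  · simp only [Relations.HF, Function.uncurry_apply_pair, Function.comp_apply, map_add,
      LieHom.map_lie, map_smul, rH, rF, gHF, ← Int.cast_smul_eq_zsmul ℚ, lie_smul]
    module
  · simp only [Relations.adE, Function.uncurry_apply_pair, Function.comp_apply, km_hom_adpow,
      LieHom.map_lie, rE, map_smul, smul_pow, LinearMap.smul_apply, smul_lie, lie_smul, gadE,
      smul_zero]
  · simp only [Relations.adF, Function.uncurry_apply_pair, Function.comp_apply, km_hom_adpow,
      LieHom.map_lie, rF, map_smul, smul_pow, LinearMap.smul_apply, smul_lie, lie_smul, gadF,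
      smul_zero]

/-- The grading automorphism. -/
def kmSig (A : Matrix ι ι ℤ) : Module.End ℚ (Matrix.ToLieAlgebra ℚ A) :=
  Submodule.liftQ (Relations.toIdeal ℚ A).toSubmodule (kmSig' A).toLinearMap
    (fun _ hx => kmSig'_le A hx)

lemma kmSig_pi (A : Matrix ι ι ℤ) (x) : kmSig A (kmPi A x) = kmSig' A x := rfl

lemma kmSig_lie (A : Matrix ι ι ℤ) (x y) : kmSig A ⁅x, y⁆ = ⁅kmSig A x, kmSig A y⁆ := by
  obtain ⟨x, rfl⟩ := kmPi_surj A x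
  obtain ⟨y, rfl⟩ := kmPi_surj A y
  rw [← LieHom.map_lie, kmSig_pi, kmSig_pi, kmSig_pi, LieHom.map_lie]

lemma kmSig_H (A : Matrix ι ι ℤ) (i : ι) : kmSig A (gH A i) = gH A i :=
  FreeLieAlgebra.lift_of_apply (kmSigGen A) (Generators.H i)

lemma kmSig_E (A : Matrix ι ι ℤ) (i : ι) : kmSig A (gE A i) = (2 : ℚ) • gE A i :=
  FreeLieAlgebra.lift_of_apply (kmSigGen A) (Generators.E i)

lemma kmSig_F (A : Matrix ι ι ℤ) (i : ι) : kmSig A (gF A i) = (2⁻¹ : ℚ) • gF A i :=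
  FreeLieAlgebra.lift_of_apply (kmSigGen A) (Generators.F i)

/-- Generators generate. -/
lemma km_gen (A : Matrix ι ι ℤ) (S : LieSubalgebra ℚ (Matrix.ToLieAlgebra ℚ A))
    (hH : ∀ i, gH A i ∈ S) (hE : ∀ i, gE A i ∈ S) (hF : ∀ i, gF A i ∈ S) (y) : y ∈ S := by
  obtain ⟨x, rfl⟩ := kmPi_surj A y
  refine km_free_induction (S.comap (kmPi A)) ?_ x
  rintro (i | i | i)
  · exact hH i
  · exact hE i
  · exact hF i

lemma km_span (A : Matrix ι ι ℤ) :
    (LieSubalgebra.lieSpan ℚ (Matrix.ToLieAlgebra ℚ A) (Set.range (gF A))).toSubmodule ⊔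
      Submodule.span ℚ (Set.range (gH A)) ⊔
      (LieSubalgebra.lieSpan ℚ (Matrix.ToLieAlgebra ℚ A) (Set.range (gE A))).toSubmodule = ⊤ := by
  set N := LieSubalgebra.lieSpan ℚ (Matrix.ToLieAlgebra ℚ A) (Set.range (gF A)) with hN
  set P := LieSubalgebra.lieSpan ℚ (Matrix.ToLieAlgebra ℚ A) (Set.range (gE A)) with hP
  set H := Submodule.span ℚ (Set.range (gH A)) with hH
  have NS : N.toSubmodule ≤ N.toSubmodule ⊔ H ⊔ P.toSubmodule := le_sup_left.trans le_sup_left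
  have HS : H ≤ N.toSubmodule ⊔ H ⊔ P.toSubmodule := le_sup_right.trans le_sup_left
  have PS : P.toSubmodule ≤ N.toSubmodule ⊔ H ⊔ P.toSubmodule := le_sup_right
  have memF : ∀ i, gF A i ∈ N.toSubmodule := fun i => LieSubalgebra.subset_lieSpan ⟨i, rfl⟩
  have memE : ∀ i, gE A i ∈ P.toSubmodule := fun i => LieSubalgebra.subset_lieSpan ⟨i, rfl⟩
  have memH : ∀ i, gH A i ∈ H := fun i => Submodule.subset_span ⟨i, rfl⟩
  have hhF : ∀ i j, ∃ c : ℚ, ⁅gH A i, gF A j⁆ = c • gF A j := fun i j =>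
    ⟨-(A i j : ℚ), by rw [gHF, neg_smul]⟩
  have hhE : ∀ i j, ∃ c : ℚ, ⁅gH A i, gE A j⁆ = c • gE A j := fun i j => ⟨_, gHE A i j⟩
  have heF : ∀ i j, ⁅gE A i, gF A j⁆ ∈ H := fun i j => by
    rw [gEF]; split_ifs
    · exact memH i
    · exact Submodule.zero_mem _
  have hfE : ∀ i j, ⁅gF A i, gE A j⁆ ∈ H := fun i j => by
    rw [← lie_skew]; exact neg_mem (heF j i)
  have onH : ∀ x : Matrix.ToLieAlgebra ℚ A, (∀ i, ⁅x, gH A i⁆ ∈ N.toSubmodule ⊔ H ⊔ P.toSubmodule) →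
      ∀ y ∈ H, ⁅x, y⁆ ∈ N.toSubmodule ⊔ H ⊔ P.toSubmodule := by
    intro x hx y hy
    have : H ≤ (N.toSubmodule ⊔ H ⊔ P.toSubmodule).comap
        (LieAlgebra.ad ℚ (Matrix.ToLieAlgebra ℚ A) x) := by
      refine Submodule.span_le.2 ?_
      rintro _ ⟨i, rfl⟩
      exact hx i
    exact this hy
  have glue : ∀ x : Matrix.ToLieAlgebra ℚ A, (∀ y ∈ N, ⁅x, y⁆ ∈ N.toSubmodule ⊔ H ⊔ P.toSubmodule) →
      (∀ i, ⁅x, gH A i⁆ ∈ N.toSubmodule ⊔ H ⊔ P.toSubmodule) →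
      (∀ y ∈ P, ⁅x, y⁆ ∈ N.toSubmodule ⊔ H ⊔ P.toSubmodule) →
      ∀ y ∈ N.toSubmodule ⊔ H ⊔ P.toSubmodule, ⁅x, y⁆ ∈ N.toSubmodule ⊔ H ⊔ P.toSubmodule := by
    intro x h1 h2 h3 y hy
    obtain ⟨u, hu, p, hp, rfl⟩ := Submodule.mem_sup.1 hy
    obtain ⟨n, hn, h, hh, rfl⟩ := Submodule.mem_sup.1 hu
    rw [lie_add, lie_add]
    exact add_mem (add_mem (h1 _ hn) (onH x h2 _ hh)) (h3 _ hp)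
  let St : LieSubalgebra ℚ (Matrix.ToLieAlgebra ℚ A) :=
    { carrier := {x | ∀ y ∈ N.toSubmodule ⊔ H ⊔ P.toSubmodule,
        ⁅x, y⁆ ∈ N.toSubmodule ⊔ H ⊔ P.toSubmodule}
      add_mem' := fun {a b} ha hb y hy => by
        rw [add_lie]; exact add_mem (ha y hy) (hb y hy)
      zero_mem' := fun y hy => by rw [zero_lie]; exact Submodule.zero_mem _
      smul_mem' := fun c a ha y hy => by
        rw [smul_lie]; exact Submodule.smul_mem _ _ (ha y hy)
      lie_mem' := fun {a b} ha hb y hy => by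
        rw [lie_lie]
        exact sub_mem (ha _ (hb _ hy)) (hb _ (ha _ hy)) }
  have all : ∀ x, x ∈ St := by
    refine km_gen A St ?_ ?_ ?_
    · intro i
      refine glue _ (fun y hy => NS (km_h_stable (gF A) _ (hhF i) y hy)) (fun j => ?_)
        (fun y hy => PS (km_h_stable (gE A) _ (hhE i) y hy))
      rw [gHH]; exact Submodule.zero_mem _
    · intro i
      refine glue _ (fun y hy => sup_le HS NS (km_e_stable (gF A) (gH A) hhF _ (heF i) y hy))
        (fun j => ?_) (fun y hy => PS (P.lie_mem (memE i) hy))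
      rw [← lie_skew, gHE]
      exact neg_mem (Submodule.smul_mem _ _ (PS (memE i)))
    · intro i
      refine glue _ (fun y hy => NS (N.lie_mem (memF i) hy))
        (fun j => ?_) (fun y hy => sup_le HS PS (km_e_stable (gE A) (gH A) hhE _ (hfE i) y hy))
      rw [← lie_skew, gHF, neg_neg]
      exact Submodule.smul_mem _ _ (NS (memF i))
  let S2 : LieSubalgebra ℚ (Matrix.ToLieAlgebra ℚ A) :=
    { N.toSubmodule ⊔ H ⊔ P.toSubmodule with
      lie_mem' := fun {a b} _ hb => all a b hb }
  rw [eq_top_iff]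
  intro y _
  exact km_gen A S2 (fun i => HS (memH i)) (fun i => PS (memE i)) (fun i => NS (memF i)) y

lemma km_internal (A : Matrix ι ι ℤ) :
    DirectSum.IsInternal
      (fun t : Fin 3 =>
        ![(LieSubalgebra.lieSpan ℚ (Matrix.ToLieAlgebra ℚ A)
            (Set.range (gF A))).toSubmodule,
          Submodule.span ℚ (Set.range (gH A)),
          (LieSubalgebra.lieSpan ℚ (Matrix.ToLieAlgebra ℚ A)
            (Set.range (gE A))).toSubmodule] t) := by
  have hF := km_eig (kmSig A) (kmSig_lie A) (Set.Ioo 0 1)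
    (fun a ha b hb => ⟨mul_pos ha.1 hb.1, mul_lt_one_of_nonneg_of_lt_one_left ha.1.le ha.2 hb.2.le⟩)
    (gF A) 2⁻¹ (by norm_num) (kmSig_F A)
  have hE := km_eig (kmSig A) (kmSig_lie A) (Set.Ioi 1)
    (fun a ha b hb => by
      simp only [Set.mem_Ioi] at *
      nlinarith)
    (gE A) 2 (by norm_num) (kmSig_E A)
  have hH : Submodule.span ℚ (Set.range (gH A)) ≤ ⨆ μ ∈ ({1} : Set ℚ), (kmSig A).eigenspace μ := by
    simp only [Set.mem_singleton_iff, iSup_iSup_eq_left]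
    refine Submodule.span_le.2 ?_
    rintro _ ⟨i, rfl⟩
    exact Module.End.mem_eigenspace_iff.2 (by rw [kmSig_H, one_smul])
  have ind := (kmSig A).eigenspaces_iSupIndep
  let s : Fin 3 → Set ℚ := ![Set.Ioo 0 1, {1}, Set.Ioi 1]
  rw [DirectSum.isInternal_submodule_iff_iSupIndep_and_iSup_eq_top]
  constructor
  · have le : ∀ t : Fin 3, (![(LieSubalgebra.lieSpan ℚ (Matrix.ToLieAlgebra ℚ A)
            (Set.range (gF A))).toSubmodule,
          Submodule.span ℚ (Set.range (gH A)),
          (LieSubalgebra.lieSpan ℚ (Matrix.ToLieAlgebra ℚ A)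
            (Set.range (gE A))).toSubmodule] : Fin 3 → Submodule ℚ (Matrix.ToLieAlgebra ℚ A)) t ≤
            ⨆ μ ∈ s t, (kmSig A).eigenspace μ := by
      intro t
      fin_cases t
      · exact hF
      · exact hH
      · exact hE
    have dis : ∀ t u : Fin 3, u ≠ t → s u ⊆ (s t)ᶜ := by
      intro t u
      fin_cases t <;> fin_cases u <;> simp [s, Set.subset_def] <;> intros <;> linarith
    intro t
    refine Disjoint.mono (le t) (iSup₂_le fun u hu => (le u).trans
      (biSup_mono (dis t u hu))) (ind.disjoint_biSup_biSup disjoint_compl_right)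
  · rw [eq_top_iff, ← km_span A]
    refine sup_le (sup_le ?_ ?_) ?_
    · exact le_iSup_of_le (0 : Fin 3) le_rfl
    · exact le_iSup_of_le (1 : Fin 3) le_rfl
    · exact le_iSup_of_le (2 : Fin 3) le_rfl

end final

/-- **Triangular decomposition.** For any generalized Cartan matrix `A` of size `k`, the
Kac–Moody algebra `g(A)` over `ℚ` is the internal direct sum of the Lie subalgebra `N₋`
generated by the `f i`, the span `H` of the `h i`, and the Lie subalgebra `N₊` generated by
the `e i`; moreover the `h i` are linearly independent, so `dim H = k`. -/
theorem triangular_decomposition {k : ℕ} (A : Matrix (Fin k) (Fin k) ℤ) (hA : IsGCM A) :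
    DirectSum.IsInternal
      (fun t : Fin 3 =>
        ![(LieSubalgebra.lieSpan ℚ (Matrix.ToLieAlgebra ℚ A)
            (Set.range (gF A))).toSubmodule,
          Submodule.span ℚ (Set.range (gH A)),
          (LieSubalgebra.lieSpan ℚ (Matrix.ToLieAlgebra ℚ A)
            (Set.range (gE A))).toSubmodule] t) ∧
    LinearIndependent ℚ (gH A) ∧
    Module.finrank ℚ (Submodule.span ℚ (Set.range (gH A))) = k := by
  refine ⟨km_internal A, km_linInd A hA, ?_⟩
  rw [finrank_span_eq_card (km_linInd A hA), Fintype.card_fin]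
end
end

section
/- Level-zero subalgebra: let A be a generalized Cartan matrix of size k, fix an index i₀, and let D be the level derivation of g(A) with respect to i₀ (D(e_{i₀}) = e_{i₀}, D(f_{i₀}) = −f_{i₀}, D vanishing on all other generators). Then the eigenspace g_0 of D with eigenvalue 0 is exactly the Lie subalgebra of g(A) generated by {h_1,…,h_k} ∪ {e_j, f_j : j ≠ i₀}. -/
noncomputable section

open CartanMatrix

section LevelAux

variable {L ι : Type*} [LieRing L] [LieAlgebra ℚ L]

/-- A submodule stable under the adjoint action of `y` on the generators of a Lie subalgebra. -/
theorem aux_ad_stable (f : ι → L) (y : L)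
    (hy : ∀ j, ⁅y, f j⁆ ∈ LieSubalgebra.lieSpan ℚ L (Set.range f)) :
    ∀ x ∈ LieSubalgebra.lieSpan ℚ L (Set.range f),
      ⁅y, x⁆ ∈ LieSubalgebra.lieSpan ℚ L (Set.range f) := by
  intro x hx
  induction hx using LieSubalgebra.lieSpan_induction with
  | mem x hx => obtain ⟨j, rfl⟩ := hx; exact hy j
  | zero => simp
  | add x z _ _ h1 h2 => rw [lie_add]; exact add_mem h1 h2
  | smul a x _ h1 => rw [lie_smul]; exact SMulMemClass.smul_mem a h1
  | lie x z hx hz h1 h2 =>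
    rw [leibniz_lie]
    exact add_mem (LieSubalgebra.lie_mem _ h1 hz) (LieSubalgebra.lie_mem _ hx h2)

theorem aux_H_stable (h f : ι → L)
    (hf : ∀ i j, ⁅h i, f j⁆ ∈ LieSubalgebra.lieSpan ℚ L (Set.range f)) :
    ∀ y ∈ Submodule.span ℚ (Set.range h), ∀ x ∈ LieSubalgebra.lieSpan ℚ L (Set.range f),
      ⁅y, x⁆ ∈ LieSubalgebra.lieSpan ℚ L (Set.range f) := by
  intro y hy x hx
  induction hy using Submodule.span_induction with
  | mem y hy => obtain ⟨j, rfl⟩ := hy; exact aux_ad_stable f _ (hf j) x hx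
  | zero => simp
  | add y z _ _ h1 h2 => rw [add_lie]; exact add_mem h1 h2
  | smul a y _ h1 => rw [smul_lie]; exact SMulMemClass.smul_mem a h1

/-- `ad (e i)` maps `N₋` into `H + N₋`. -/
theorem aux_e_N (h e f : ι → L)
    (hf : ∀ i j, ⁅h i, f j⁆ ∈ LieSubalgebra.lieSpan ℚ L (Set.range f))
    (ef : ∀ i j, ⁅e i, f j⁆ ∈ Submodule.span ℚ (Set.range h)) (i : ι) :
    ∀ x ∈ LieSubalgebra.lieSpan ℚ L (Set.range f),
      ⁅e i, x⁆ ∈ Submodule.span ℚ (Set.range h) ⊔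
        (LieSubalgebra.lieSpan ℚ L (Set.range f)).toSubmodule := by
  have key : ∀ u ∈ Submodule.span ℚ (Set.range h) ⊔
        (LieSubalgebra.lieSpan ℚ L (Set.range f)).toSubmodule,
      ∀ x ∈ LieSubalgebra.lieSpan ℚ L (Set.range f),
      ⁅u, x⁆ ∈ LieSubalgebra.lieSpan ℚ L (Set.range f) := by
    intro u hu x hx
    obtain ⟨a, ha, b, hb, rfl⟩ := Submodule.mem_sup.1 hu
    rw [add_lie]
    exact add_mem (aux_H_stable h f hf a ha x hx) (LieSubalgebra.lie_mem _ hb hx)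
  intro x hx
  induction hx using LieSubalgebra.lieSpan_induction with
  | mem x hx => obtain ⟨j, rfl⟩ := hx; exact Submodule.mem_sup_left (ef i j)
  | zero => simp
  | add x z _ _ h1 h2 => rw [lie_add]; exact add_mem h1 h2
  | smul a x _ h1 => rw [lie_smul]; exact Submodule.smul_mem _ a h1
  | lie x z hx hz h1 h2 =>
    rw [leibniz_lie]
    refine Submodule.mem_sup_right (add_mem (key _ h1 _ hz) ?_)
    rw [← lie_skew]
    exact neg_mem (key _ h2 _ hx)

/-- The triangular decomposition (sum part). -/
theorem aux_triangular (h e f : ι → L)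
    (hh : ∀ i j, ⁅h i, h j⁆ = 0)
    (he : ∀ i j, ⁅h i, e j⁆ ∈ Submodule.span ℚ {e j})
    (hf : ∀ i j, ⁅h i, f j⁆ ∈ Submodule.span ℚ {f j})
    (ef : ∀ i j, ⁅e i, f j⁆ ∈ Submodule.span ℚ (Set.range h))
    (gen : ∀ K : LieSubalgebra ℚ L, (∀ i, h i ∈ K) → (∀ i, e i ∈ K) → (∀ i, f i ∈ K) →
      ∀ x, x ∈ K) (x : L) :
    x ∈ Submodule.span ℚ (Set.range h) ⊔
      ((LieSubalgebra.lieSpan ℚ L (Set.range e)).toSubmodule ⊔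
        (LieSubalgebra.lieSpan ℚ L (Set.range f)).toSubmodule) := by
  have subN : ∀ (g : ι → L) (j : ι), ∀ y ∈ Submodule.span ℚ {g j},
      y ∈ LieSubalgebra.lieSpan ℚ L (Set.range g) := by
    intro g j y hy
    obtain ⟨a, rfl⟩ := Submodule.mem_span_singleton.1 hy
    exact SMulMemClass.smul_mem a (LieSubalgebra.subset_lieSpan ⟨j, rfl⟩)
  have he' := fun i j => subN e j _ (he i j)
  have hf' := fun i j => subN f j _ (hf i j)
  have fe : ∀ i j, ⁅f i, e j⁆ ∈ Submodule.span ℚ (Set.range h) := by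
    intro i j; rw [← lie_skew]; exact neg_mem (ef j i)
  have hmem : ∀ i, h i ∈ Submodule.span ℚ (Set.range h) :=
    fun i => Submodule.subset_span ⟨i, rfl⟩
  have emem : ∀ i, e i ∈ LieSubalgebra.lieSpan ℚ L (Set.range e) :=
    fun i => LieSubalgebra.subset_lieSpan ⟨i, rfl⟩
  have fmem : ∀ i, f i ∈ LieSubalgebra.lieSpan ℚ L (Set.range f) :=
    fun i => LieSubalgebra.subset_lieSpan ⟨i, rfl⟩
  have hHH : ∀ i, ∀ y ∈ Submodule.span ℚ (Set.range h), ⁅h i, y⁆ = 0 := by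
    intro i y hy
    induction hy using Submodule.span_induction with
    | mem y hy => obtain ⟨j, rfl⟩ := hy; exact hh i j
    | zero => simp
    | add y z _ _ h1 h2 => rw [lie_add, h1, h2, add_zero]
    | smul a y _ h1 => rw [lie_smul, h1, smul_zero]
  have hEN := aux_e_N h e f hf' ef
  have hFN := aux_e_N h f e he' fe
  have hHE := aux_H_stable h e he'
  have hHF := aux_H_stable h f hf'
  generalize hHdef : Submodule.span ℚ (Set.range h) = H at *
  generalize hEdef : LieSubalgebra.lieSpan ℚ L (Set.range e) = E at *
  generalize hFdef : LieSubalgebra.lieSpan ℚ L (Set.range f) = F at *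
  set T := H ⊔ (E.toSubmodule ⊔ F.toSubmodule) with hT
  have HT : ∀ y ∈ H, y ∈ T := fun y hy => Submodule.mem_sup_left hy
  have ET : ∀ y ∈ E, y ∈ T := fun y hy => Submodule.mem_sup_right (Submodule.mem_sup_left hy)
  have FT : ∀ y ∈ F, y ∈ T := fun y hy => Submodule.mem_sup_right (Submodule.mem_sup_right hy)
  have HFT : H ⊔ F.toSubmodule ≤ T := sup_le HT FT
  have HET : H ⊔ E.toSubmodule ≤ T := sup_le HT ET
  -- the stabiliser of `T`
  let K : LieSubalgebra ℚ L :=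
    { carrier := {y | ∀ t ∈ T, ⁅y, t⁆ ∈ T}
      add_mem' := by
        intro a b ha hb t ht
        rw [add_lie]; exact add_mem (ha t ht) (hb t ht)
      zero_mem' := by intro t ht; simp
      smul_mem' := by
        intro c a ha t ht
        rw [smul_lie]; exact Submodule.smul_mem _ c (ha t ht)
      lie_mem' := by
        intro a b ha hb t ht
        rw [lie_lie]; exact sub_mem (ha _ (hb t ht)) (hb _ (ha t ht)) }
  have mkK : ∀ y, (∀ t ∈ H, ⁅y, t⁆ ∈ T) → (∀ t ∈ E, ⁅y, t⁆ ∈ T) → (∀ t ∈ F, ⁅y, t⁆ ∈ T) →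
      y ∈ K := by
    intro y h1 h2 h3 t ht
    obtain ⟨a, ha, b, hb, rfl⟩ := Submodule.mem_sup.1 ht
    obtain ⟨b, hb', c, hc, rfl⟩ := Submodule.mem_sup.1 hb
    rw [lie_add, lie_add]
    exact add_mem (h1 a ha) (add_mem (h2 b hb') (h3 c hc))
  have hK : ∀ y, y ∈ K := by
    apply gen K
    · intro i
      refine mkK _ (fun t ht => ?_) (fun t ht => ?_) (fun t ht => ?_)
      · rw [hHH i t ht]; exact zero_mem _
      · exact ET _ (hHE _ (hmem i) t ht)
      · exact FT _ (hHF _ (hmem i) t ht)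
    · intro i
      refine mkK _ (fun t ht => ?_) (fun t ht => ?_) (fun t ht => ?_)
      · rw [← lie_skew]; exact neg_mem (ET _ (hHE t ht _ (emem i)))
      · exact ET _ (LieSubalgebra.lie_mem _ (emem i) ht)
      · exact HFT (hEN i t ht)
    · intro i
      refine mkK _ (fun t ht => ?_) (fun t ht => ?_) (fun t ht => ?_)
      · rw [← lie_skew]; exact neg_mem (FT _ (hHF t ht _ (fmem i)))
      · exact HET (hFN i t ht)
      · exact FT _ (LieSubalgebra.lie_mem _ (fmem i) ht)
  let T' : LieSubalgebra ℚ L := { T with lie_mem' := fun {a b} _ hb => hK a b hb }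
  exact gen T' (fun i => HT _ (hmem i)) (fun i => ET _ (emem i)) (fun i => FT _ (fmem i)) x

/-- The sum of a level-zero subalgebra and of all eigenspaces on one side of zero contains the
Lie subalgebra generated by elements of that sum. -/
theorem aux_levels (D : LieDerivation ℚ L L) (S : LieSubalgebra ℚ L)
    (hS : ∀ s ∈ S, D s = 0) (ε : ℚ) (e : ι → L)
    (he : ∀ i, e i ∈ S.toSubmodule ⊔
      ⨆ n : ℕ, Module.End.eigenspace D.toLinearMap (ε * ((n : ℚ) + 1))) :
    ∀ x ∈ LieSubalgebra.lieSpan ℚ L (Set.range e), x ∈ S.toSubmodule ⊔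
      ⨆ n : ℕ, Module.End.eigenspace D.toLinearMap (ε * ((n : ℚ) + 1)) := by
  set P := ⨆ n : ℕ, Module.End.eigenspace D.toLinearMap (ε * ((n : ℚ) + 1)) with hP
  have memE : ∀ (μ : ℚ) (x : L), x ∈ Module.End.eigenspace D.toLinearMap μ ↔ D x = μ • x := by
    intro μ x; exact Module.End.mem_eigenspace_iff
  have memP : ∀ n : ℕ, ∀ x, D x = (ε * ((n : ℚ) + 1)) • x → x ∈ P := fun n x hx =>
    Submodule.mem_iSup_of_mem n ((memE _ _).2 hx)
  have hSP : ∀ s ∈ S, ∀ p ∈ P, ⁅s, p⁆ ∈ P := by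
    intro s hs p hp
    induction hp using Submodule.iSup_induction' with
    | mem n x hx =>
      rw [memE] at hx
      apply memP n
      rw [LieDerivation.apply_lie_eq_add, hx, hS s hs]; simp
    | zero => simp
    | add x y _ _ h1 h2 => rw [lie_add]; exact add_mem h1 h2
  have hPP : ∀ s ∈ P, ∀ p ∈ P, ⁅s, p⁆ ∈ P := by
    intro s hs p hp
    induction hp using Submodule.iSup_induction' with
    | mem n x hx =>
      rw [memE] at hx
      induction hs using Submodule.iSup_induction' with
      | mem m y hy =>
        rw [memE] at hy
        apply memP (m + n + 1)
        rw [LieDerivation.apply_lie_eq_add, hx, hy, lie_smul, smul_lie, ← add_smul]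
        congr 1; push_cast; ring
      | zero => simp
      | add x y _ _ h1 h2 => rw [add_lie]; exact add_mem h1 h2
    | zero => simp
    | add x y _ _ h1 h2 => rw [lie_add]; exact add_mem h1 h2
  intro x hx
  induction hx using LieSubalgebra.lieSpan_induction with
  | mem x hx => obtain ⟨j, rfl⟩ := hx; exact he j
  | zero => simp
  | add x z _ _ h1 h2 => exact add_mem h1 h2
  | smul a x _ h1 => exact Submodule.smul_mem _ a h1
  | lie x z hx hz h1 h2 =>
    obtain ⟨a, ha, b, hb, rfl⟩ := Submodule.mem_sup.1 h1
    obtain ⟨c, hc, d, hd, rfl⟩ := Submodule.mem_sup.1 h2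
    rw [add_lie, lie_add, lie_add, ← lie_skew b c]
    exact add_mem (add_mem (Submodule.mem_sup_left (S.lie_mem ha hc))
      (Submodule.mem_sup_right (hSP a ha d hd)))
      (add_mem (Submodule.mem_sup_right (neg_mem (hSP c hc b hb)))
        (Submodule.mem_sup_right (hPP b hb d hd)))

theorem aux_main (h e f : ι → L) [DecidableEq ι]
    (hh : ∀ i j, ⁅h i, h j⁆ = 0)
    (he : ∀ i j, ⁅h i, e j⁆ ∈ Submodule.span ℚ {e j})
    (hf : ∀ i j, ⁅h i, f j⁆ ∈ Submodule.span ℚ {f j})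
    (ef : ∀ i j, ⁅e i, f j⁆ ∈ Submodule.span ℚ (Set.range h))
    (gen : ∀ K : LieSubalgebra ℚ L, (∀ i, h i ∈ K) → (∀ i, e i ∈ K) → (∀ i, f i ∈ K) →
      ∀ x, x ∈ K) (i₀ : ι) (D : LieDerivation ℚ L L)
    (hDe : ∀ i, D (e i) = if i = i₀ then e i else 0)
    (hDf : ∀ i, D (f i) = if i = i₀ then -f i else 0)
    (hDh : ∀ i, D (h i) = 0) :
    Module.End.eigenspace D.toLinearMap 0 =
      (LieSubalgebra.lieSpan ℚ L
        (Set.range h ∪ {x | ∃ j, j ≠ i₀ ∧ (x = e j ∨ x = f j)})).toSubmodule := by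
  set S := LieSubalgebra.lieSpan ℚ L
        (Set.range h ∪ {x | ∃ j, j ≠ i₀ ∧ (x = e j ∨ x = f j)}) with hSdef
  have memE : ∀ (μ : ℚ) (x : L), x ∈ Module.End.eigenspace D.toLinearMap μ ↔ D x = μ • x := by
    intro μ x; exact Module.End.mem_eigenspace_iff
  have hS : ∀ s ∈ S, D s = 0 := by
    intro s hs
    induction hs using LieSubalgebra.lieSpan_induction with
    | mem x hx =>
      rcases hx with ⟨j, rfl⟩ | ⟨j, hj, rfl | rfl⟩
      · exact hDh j
      · rw [hDe, if_neg hj]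
      · rw [hDf, if_neg hj]
    | zero => simp
    | add x z _ _ h1 h2 => rw [map_add, h1, h2, add_zero]
    | smul a x _ h1 => rw [map_smul, h1, smul_zero]
    | lie x z hx hz h1 h2 => rw [LieDerivation.apply_lie_eq_add, h1, h2]; simp
  have hSh : ∀ i, h i ∈ S := fun i => LieSubalgebra.subset_lieSpan (Or.inl ⟨i, rfl⟩)
  have hSe : ∀ i, i ≠ i₀ → e i ∈ S := fun i hi =>
    LieSubalgebra.subset_lieSpan (Or.inr ⟨i, hi, Or.inl rfl⟩)
  have hSf : ∀ i, i ≠ i₀ → f i ∈ S := fun i hi =>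
    LieSubalgebra.subset_lieSpan (Or.inr ⟨i, hi, Or.inr rfl⟩)
  have hE := aux_levels D S hS 1 e (by
    intro i
    by_cases hi : i = i₀
    · refine Submodule.mem_sup_right (Submodule.mem_iSup_of_mem 0 ((memE _ _).2 ?_))
      rw [hDe, if_pos hi]; simp
    · exact Submodule.mem_sup_left (hSe i hi))
  have hF := aux_levels D S hS (-1) f (by
    intro i
    by_cases hi : i = i₀
    · refine Submodule.mem_sup_right (Submodule.mem_iSup_of_mem 0 ((memE _ _).2 ?_))
      rw [hDf, if_pos hi]; simp
    · exact Submodule.mem_sup_left (hSf i hi))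
  set Q := ⨆ μ : ℚ, ⨆ _ : μ ≠ 0, Module.End.eigenspace D.toLinearMap μ with hQ
  have hle : ∀ ε : ℚ, ε ≠ 0 →
      (⨆ n : ℕ, Module.End.eigenspace D.toLinearMap (ε * ((n : ℚ) + 1))) ≤ Q := by
    intro ε hε
    refine iSup_le fun n => ?_
    exact le_iSup₂_of_le (ε * ((n : ℚ) + 1)) (mul_ne_zero hε (by positivity)) le_rfl
  have hdisj : Disjoint (Module.End.eigenspace D.toLinearMap 0) Q :=
    (Module.End.eigenspaces_iSupIndep D.toLinearMap) 0
  have hall : ∀ x, x ∈ S.toSubmodule ⊔ Q := by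
    intro x
    have hx := aux_triangular h e f hh he hf ef gen x
    refine (sup_le ?_ (sup_le ?_ ?_) : _ ≤ S.toSubmodule ⊔ Q) hx
    · refine le_trans (Submodule.span_le.2 ?_) le_sup_left
      rintro _ ⟨i, rfl⟩; exact hSh i
    · intro y hy
      exact sup_le_sup_left (hle 1 one_ne_zero) _ (hE y hy)
    · intro y hy
      exact sup_le_sup_left (hle (-1) (by norm_num)) _ (hF y hy)
  apply le_antisymm
  · intro x hx
    obtain ⟨s, hs, q, hq, rfl⟩ := Submodule.mem_sup.1 (hall x)
    have hs0 : s ∈ Module.End.eigenspace D.toLinearMap 0 := by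
      rw [memE, hS s hs, zero_smul]
    have hq0 : q ∈ Module.End.eigenspace D.toLinearMap 0 := by
      have := sub_mem hx hs0
      rwa [add_sub_cancel_left] at this
    rw [Submodule.disjoint_def.1 hdisj q hq0 hq, add_zero]
    exact hs
  · intro s hs
    rw [memE, hS s hs, zero_smul]

end LevelAux

section KMAux

variable {B : Type*} [DecidableEq B] (A : Matrix B B ℤ)

/-- The quotient map from the free Lie algebra. -/
def kmProj : FreeLieAlgebra ℚ (Generators B) →ₗ⁅ℚ⁆ Matrix.ToLieAlgebra ℚ A :=
  { (LieSubmodule.Quotient.mk' (Relations.toIdeal ℚ A) :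
      FreeLieAlgebra ℚ (Generators B) →ₗ[ℚ]
        FreeLieAlgebra ℚ (Generators B) ⧸ Relations.toIdeal ℚ A) with
    map_lie' := fun {x y} => LieSubmodule.Quotient.mk_bracket _ x y }

theorem kmProj_of (x : Generators B) : kmProj A (FreeLieAlgebra.of ℚ x) = KMgen A x := rfl

theorem kmProj_surj : Function.Surjective (kmProj A) := by
  intro x
  obtain ⟨y, hy⟩ := LieSubmodule.Quotient.surjective_mk' (Relations.toIdeal ℚ A) x
  exact ⟨y, hy⟩

theorem kmProj_rel (x : FreeLieAlgebra ℚ (Generators B)) (hx : x ∈ Relations.toSet ℚ A) :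
    kmProj A x = 0 :=
  (LieSubmodule.Quotient.mk_eq_zero' (N := Relations.toIdeal ℚ A)).2
    (LieSubmodule.subset_lieSpan hx)

theorem km_gen_s2 (K : LieSubalgebra ℚ (Matrix.ToLieAlgebra ℚ A))
    (h1 : ∀ i, gH A i ∈ K) (h2 : ∀ i, gE A i ∈ K) (h3 : ∀ i, gF A i ∈ K) (x) : x ∈ K := by
  have hg : ∀ g, KMgen A g ∈ K := by
    rintro (i | i | i)
    · exact h1 i
    · exact h2 i
    · exact h3 i
  let φ : FreeLieAlgebra ℚ (Generators B) →ₗ⁅ℚ⁆ K :=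
    FreeLieAlgebra.lift ℚ (fun g => (⟨KMgen A g, hg g⟩ : K))
  have hφ : K.incl.comp φ = kmProj A := by
    apply FreeLieAlgebra.hom_ext
    intro g
    simp [φ, kmProj_of, FreeLieAlgebra.lift_of_apply]
  obtain ⟨y, rfl⟩ := kmProj_surj A x
  rw [← hφ]
  exact (φ y).2

theorem km_hh (i j : B) : ⁅gH A i, gH A j⁆ = 0 := by
  have := kmProj_rel A (Relations.HH ℚ (i, j))
    (by simp only [Relations.toSet, Set.mem_union, Set.mem_range_self, true_or, or_true])
  simpa [Relations.HH, kmProj_of, gH, gE, gF] using this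

theorem km_he (i j : B) : ⁅gH A i, gE A j⁆ = A i j • gE A j := by
  have := kmProj_rel A (Relations.HE ℚ A (i, j))
    (by simp only [Relations.toSet, Set.mem_union, Set.mem_range_self, true_or, or_true])
  simpa [Relations.HE, kmProj_of, sub_eq_zero, gH, gE, gF] using this

theorem km_hf (i j : B) : ⁅gH A i, gF A j⁆ = -(A i j • gF A j) := by
  have := kmProj_rel A (Relations.HF ℚ A (i, j))
    (by simp only [Relations.toSet, Set.mem_union, Set.mem_range_self, true_or, or_true])
  simpa [Relations.HF, kmProj_of, add_eq_zero_iff_eq_neg, gH, gE, gF] using this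

theorem km_ef (i j : B) : ⁅gE A i, gF A j⁆ = if i = j then gH A i else 0 := by
  have := kmProj_rel A (Relations.EF ℚ (i, j))
    (by simp only [Relations.toSet, Set.mem_union, Set.mem_range_self, true_or, or_true])
  by_cases hij : i = j
  · subst hij
    simpa [Relations.EF, kmProj_of, sub_eq_zero, gH, gE, gF] using this
  · simpa [Relations.EF, kmProj_of, hij, gH, gE, gF] using this

end KMAux

/-- **Level-zero subalgebra.** For a GCM `A`, an index `i₀` and the level derivation `D`
with respect to `i₀`, the eigenspace of `D` with eigenvalue `0` is exactly the Lie
subalgebra of `g(A)` generated by all `h i` together with the `e j, f j` for `j ≠ i₀`. -/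
theorem level_zero_subalgebra {k : ℕ} (A : Matrix (Fin k) (Fin k) ℤ) (hA : IsGCM A)
    (i₀ : Fin k)
    (D : LieDerivation ℚ (Matrix.ToLieAlgebra ℚ A) (Matrix.ToLieAlgebra ℚ A))
    (hDe : ∀ i, D (gE A i) = if i = i₀ then gE A i else 0)
    (hDf : ∀ i, D (gF A i) = if i = i₀ then -gF A i else 0)
    (hDh : ∀ i, D (gH A i) = 0) :
    Module.End.eigenspace D.toLinearMap 0 =
      (LieSubalgebra.lieSpan ℚ (Matrix.ToLieAlgebra ℚ A)
        (Set.range (gH A) ∪ {x | ∃ j, j ≠ i₀ ∧ (x = gE A j ∨ x = gF A j)})).toSubmodule := by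
  refine aux_main (gH A) (gE A) (gF A) (km_hh A) ?_ ?_ ?_ (km_gen_s2 A) i₀ D hDe hDf hDh
  · intro i j
    rw [km_he, ← Int.cast_smul_eq_zsmul ℚ]
    exact Submodule.smul_mem _ _ (Submodule.mem_span_singleton_self _)
  · intro i j
    rw [km_hf, ← Int.cast_smul_eq_zsmul ℚ]
    exact neg_mem (Submodule.smul_mem _ _ (Submodule.mem_span_singleton_self _))
  · intro i j
    rw [km_ef]
    split_ifs
    · exact Submodule.subset_span ⟨i, rfl⟩
    · exact zero_mem _
end
end

section
/- Subalgebra embedding from node deletion: let A be a generalized Cartan matrix of size k, fix an index i₀, and let A' be the (k−1)×(k−1) principal submatrix of A obtained by deleting row and column i₀ (A' is again a GCM). Then the Lie algebra homomorphism g(A') → g(A) sending each generator h_j, e_j, f_j of g(A') (j ≠ i₀) to the same-named generator of g(A) is well defined and injective. -/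
noncomputable section

open CartanMatrix

attribute [local instance] LieRing.ofAssociativeRing

/-- Iterated bracket. -/
def adp {L : Type*} [LieRing L] (x : L) : ℕ → L → L
  | 0, y => y
  | n + 1, y => ⁅x, adp x n y⁆

theorem adp_zero {L : Type*} [LieRing L] (x y : L) : adp x 0 y = y := rfl

theorem adp_succ {L : Type*} [LieRing L] (x y : L) (n : ℕ) :
    adp x (n + 1) y = ⁅x, adp x n y⁆ := rfl

theorem adp_eq {L : Type*} [LieRing L] [LieAlgebra ℚ L] (x y : L) (n : ℕ) :
    adp x n y = ((LieAlgebra.ad ℚ L x) ^ n) y := by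
  induction n with
  | zero => rfl
  | succ n ih => rw [adp_succ, ih, pow_succ']; rfl

theorem adp_eq' {L : Type*} [LieRing L] [LieAlgebra ℚ L] (x y : L) (n : ℕ) :
    adp x (n + 1) y = ((LieAlgebra.ad ℚ L x) ^ n) ⁅x, y⁆ := by
  rw [adp_eq, pow_succ]; rfl

theorem adp_zero_left {L : Type*} [LieRing L] (y : L) (n : ℕ) :
    adp (0 : L) (n + 1) y = 0 := by
  rw [adp_succ, zero_lie]

theorem adp_zero_right {L : Type*} [LieRing L] (x : L) (n : ℕ) :
    adp x n (0 : L) = 0 := by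
  induction n with
  | zero => rfl
  | succ n ih => rw [adp_succ, ih, lie_zero]

theorem adp_self {L : Type*} [LieRing L] (x : L) (n : ℕ) :
    adp x (n + 1) x = 0 := by
  induction n with
  | zero => rw [adp_succ, adp_zero, lie_self]
  | succ n ih => rw [adp_succ, ih, lie_zero]

theorem map_adp {L L' : Type*} [LieRing L] [LieAlgebra ℚ L] [LieRing L'] [LieAlgebra ℚ L']
    (φ : L →ₗ⁅ℚ⁆ L') (x y : L) (n : ℕ) : φ (adp x n y) = adp (φ x) n (φ y) := by
  induction n with
  | zero => rfl
  | succ n ih => rw [adp_succ, adp_succ, LieHom.map_lie, ih]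

theorem map_adp_alg {R S : Type*} [Ring R] [Algebra ℚ R] [Ring S] [Algebra ℚ S]
    (φ : R →ₐ[ℚ] S) (x y : R) (n : ℕ) : φ (adp x n y) = adp (φ x) n (φ y) := by
  induction n with
  | zero => rfl
  | succ n ih => simp only [adp_succ, LieRing.of_associative_ring_bracket, map_sub, map_mul, ih]

/-- The relations without the Serre relations. -/
structure PreRel {B : Type*} (A : Matrix B B ℤ) {L : Type*} [LieRing L]
    (h e f : B → L) : Prop where
  hh : ∀ i j, ⁅h i, h j⁆ = 0
  ef : ∀ i, ⁅e i, f i⁆ = h i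
  ef' : ∀ i j, i ≠ j → ⁅e i, f j⁆ = 0
  he : ∀ i j, ⁅h i, e j⁆ = A i j • e j
  hf : ∀ i j, ⁅h i, f j⁆ = -(A i j • f j)

/-- The exponent in the Serre relations. -/
def sx {B : Type*} (A : Matrix B B ℤ) (i j : B) : ℕ := (-A i j).toNat + 1

/-- The Chevalley–Serre relations. -/
structure KMRel {B : Type*} (A : Matrix B B ℤ) {L : Type*} [LieRing L]
    (h e f : B → L) : Prop extends PreRel A h e f where
  se : ∀ i j, adp (e i) (sx A i j) (e j) = 0
  sf : ∀ i j, adp (f i) (sx A i j) (f j) = 0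

theorem PreRel.h_adp {B : Type*} {A : Matrix B B ℤ} {L : Type*} [LieRing L]
    {h e f : B → L} (r : PreRel A h e f) (k i j : B) (n : ℕ) :
    ⁅h k, adp (f i) n (f j)⁆ = -((n * A k i + A k j) • adp (f i) n (f j)) := by
  induction n with
  | zero => simp [adp_zero, r.hf]
  | succ n ih =>
    rw [adp_succ, leibniz_lie, ih, r.hf, neg_lie, lie_neg, zsmul_lie, lie_zsmul]
    push_cast; module

theorem PreRel.e_adp_i {B : Type*} {A : Matrix B B ℤ} {L : Type*} [LieRing L]
    {h e f : B → L} (r : PreRel A h e f) (hA : IsGCM A) (i j : B) (hij : i ≠ j) (n : ℕ) :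
    ⁅e i, adp (f i) (n + 1) (f j)⁆ = -(((n + 1) * (n + A i j)) • adp (f i) n (f j)) := by
  induction n with
  | zero =>
    rw [adp_succ, adp_zero, leibniz_lie, r.ef, r.ef' i j hij, r.hf]; simp
  | succ n ih =>
    rw [adp_succ, leibniz_lie, ih, r.ef, r.h_adp, lie_neg, lie_zsmul, hA.1, ← adp_succ]
    push_cast; module

theorem PreRel.e_adp_serre {B : Type*} {A : Matrix B B ℤ} {L : Type*} [LieRing L]
    {h e f : B → L} (r : PreRel A h e f) (hA : IsGCM A) (k i j : B) (hij : i ≠ j) :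
    ⁅e k, adp (f i) (sx A i j) (f j)⁆ = 0 := by
  by_cases hki : k = i
  · subst hki
    rw [sx, r.e_adp_i hA k j hij]
    have := hA.2.1 k j hij
    have h2 : (((-A k j).toNat : ℕ) : ℤ) = - A k j := Int.toNat_of_nonneg (by omega)
    rw [h2]; simp
  by_cases hkj : k = j
  · subst hkj
    have key : ∀ n, ⁅e k, adp (f i) (n + 2) (f k)⁆ = 0 := by
      intro n
      induction n with
      | zero =>
        rw [adp_succ, adp_succ, adp_zero, leibniz_lie, r.ef' k i hki, zero_lie, zero_add,
          leibniz_lie (e k), r.ef' k i hki, zero_lie, zero_add, r.ef, ← lie_skew (f i) (h k), r.hf]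
        simp
      | succ n ih =>
        rw [adp_succ, leibniz_lie, ih, r.ef' k i hki]; simp
    rcases Nat.eq_zero_or_pos (-A i k).toNat with h0 | h0
    · have := hA.2.1 i k hij
      have h1 : A i k = 0 := by omega
      have h2 : A k i = 0 := (hA.2.2 i k).1 h1
      rw [sx, h0, adp_succ, adp_zero, leibniz_lie, r.ef' k i hki, zero_lie, zero_add, r.ef,
        ← lie_skew, r.hf, h2]
      simp
    · obtain ⟨m, hm⟩ := Nat.exists_eq_add_of_lt h0
      rw [sx, hm, show 0 + m + 1 + 1 = m + 2 by ring]
      exact key m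
  · have key : ∀ n, ⁅e k, adp (f i) n (f j)⁆ = 0 := by
      intro n
      induction n with
      | zero => exact r.ef' k j hkj
      | succ n ih => rw [adp_succ, leibniz_lie, ih, r.ef' k i hki]; simp
    exact key _

section lift
variable {B : Type*} [DecidableEq B] (A : Matrix B B ℤ)

/-- quotient map as Lie hom. -/
def KMmk : FreeLieAlgebra ℚ (Generators B) →ₗ⁅ℚ⁆ Matrix.ToLieAlgebra ℚ A where
  toLinearMap := (Relations.toIdeal ℚ A).toSubmodule.mkQ
  map_lie' := rfl

theorem KMmk_of (x : Generators B) : KMmk A (FreeLieAlgebra.of ℚ x) = KMgen A x := rfl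

theorem KMmk_surj : Function.Surjective (KMmk A) :=
  Submodule.mkQ_surjective _

theorem KMmk_zero {x} (hx : x ∈ Relations.toSet ℚ A) : KMmk A x = 0 :=
  (Submodule.Quotient.mk_eq_zero _).2 (LieSubmodule.subset_lieSpan hx)

theorem KM_rel : KMRel A (gH A) (gE A) (gF A) where
  hh i j := by
    have := KMmk_zero A (x := Relations.HH ℚ (i, j)) (by simp [Relations.toSet])
    simpa [Relations.HH, KMmk_of, gH] using this
  ef i := by
    have := KMmk_zero A (x := Relations.EF ℚ (i, i))
      (Or.inl (Or.inl (Or.inl (Or.inl (Or.inr ⟨_, rfl⟩)))))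
    simpa [Relations.EF, KMmk_of, gH, gE, gF, sub_eq_zero] using this
  ef' i j hij := by
    have := KMmk_zero A (x := Relations.EF ℚ (i, j))
      (Or.inl (Or.inl (Or.inl (Or.inl (Or.inr ⟨_, rfl⟩)))))
    simpa [Relations.EF, KMmk_of, gH, gE, gF, sub_eq_zero, hij] using this
  he i j := by
    have := KMmk_zero A (x := Relations.HE ℚ A (i, j))
      (Or.inl (Or.inl (Or.inl (Or.inr ⟨_, rfl⟩))))
    simpa [Relations.HE, KMmk_of, gH, gE, gF, sub_eq_zero] using this
  hf i j := by
    have := KMmk_zero A (x := Relations.HF ℚ A (i, j))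
      (Or.inl (Or.inl (Or.inr ⟨_, rfl⟩)))
    rw [← add_eq_zero_iff_eq_neg]
    simpa [Relations.HF, KMmk_of, gH, gE, gF, sub_eq_zero] using this
  se i j := by
    have := KMmk_zero A (x := Relations.adE ℚ A (i, j))
      (Or.inl (Or.inr ⟨_, rfl⟩))
    simp only [Relations.adE, Function.uncurry_apply_pair, ← adp_eq'] at this
    rwa [map_adp] at this
  sf i j := by
    have := KMmk_zero A (x := Relations.adF ℚ A (i, j))
      (Or.inr ⟨_, rfl⟩)
    simp only [Relations.adF, Function.uncurry_apply_pair, ← adp_eq'] at this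
    rwa [map_adp] at this

variable {A} {L : Type*} [LieRing L] [LieAlgebra ℚ L] {h e f : B → L}

/-- The map from generators. -/
def genFun (h e f : B → L) : Generators B → L
  | .H i => h i
  | .E i => e i
  | .F i => f i

theorem KMlift_aux (r : KMRel A h e f) :
    Relations.toIdeal ℚ A ≤ (FreeLieAlgebra.lift ℚ (genFun h e f)).ker := by
  refine LieSubmodule.lieSpan_le.2 ?_
  rintro x (((((⟨⟨i, j⟩, rfl⟩ | ⟨⟨i, j⟩, rfl⟩) | ⟨⟨i, j⟩, rfl⟩) | ⟨⟨i, j⟩, rfl⟩) |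
    ⟨⟨i, j⟩, rfl⟩) | ⟨⟨i, j⟩, rfl⟩) <;> simp only [SetLike.mem_coe, LieHom.mem_ker]
  · simp [Relations.HH, FreeLieAlgebra.lift_of_apply, genFun, r.hh]
  · by_cases hij : i = j
    · subst hij
      simp [Relations.EF, FreeLieAlgebra.lift_of_apply, genFun, r.ef]
    · simp [Relations.EF, FreeLieAlgebra.lift_of_apply, genFun, r.ef' i j hij, hij]
  · simp [Relations.HE, FreeLieAlgebra.lift_of_apply, genFun, r.he]
  · simp [Relations.HF, FreeLieAlgebra.lift_of_apply, genFun, r.hf]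
  · simp only [Relations.adE, Function.uncurry_apply_pair, ← adp_eq', map_adp]
    simpa [FreeLieAlgebra.lift_of_apply, genFun, sx] using r.se i j
  · simp only [Relations.adF, Function.uncurry_apply_pair, ← adp_eq', map_adp]
    simpa [FreeLieAlgebra.lift_of_apply, genFun, sx] using r.sf i j

/-- Universal property. -/
def KMlift (r : KMRel A h e f) : Matrix.ToLieAlgebra ℚ A →ₗ⁅ℚ⁆ L where
  toLinearMap := (Relations.toIdeal ℚ A).toSubmodule.liftQ
    (FreeLieAlgebra.lift ℚ (genFun h e f)).toLinearMap (fun _ hx => KMlift_aux r hx)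
  map_lie' := by
    intro x y
    obtain ⟨x, rfl⟩ := KMmk_surj A x
    obtain ⟨y, rfl⟩ := KMmk_surj A y
    exact LieHom.map_lie (FreeLieAlgebra.lift ℚ (genFun h e f)) x y

theorem KMlift_mk (r : KMRel A h e f) (x) :
    KMlift r (KMmk A x) = FreeLieAlgebra.lift ℚ (genFun h e f) x := rfl

theorem KMlift_H (r : KMRel A h e f) (i : B) : KMlift r (gH A i) = h i := by
  rw [gH, ← KMmk_of, KMlift_mk, FreeLieAlgebra.lift_of_apply]; rfl
theorem KMlift_E (r : KMRel A h e f) (i : B) : KMlift r (gE A i) = e i := by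
  rw [gE, ← KMmk_of, KMlift_mk, FreeLieAlgebra.lift_of_apply]; rfl
theorem KMlift_F (r : KMRel A h e f) (i : B) : KMlift r (gF A i) = f i := by
  rw [gF, ← KMmk_of, KMlift_mk, FreeLieAlgebra.lift_of_apply]; rfl

theorem KM_hom_ext {φ ψ : Matrix.ToLieAlgebra ℚ A →ₗ⁅ℚ⁆ L}
    (hH : ∀ i, φ (gH A i) = ψ (gH A i)) (hE : ∀ i, φ (gE A i) = ψ (gE A i))
    (hF : ∀ i, φ (gF A i) = ψ (gF A i)) : φ = ψ := by
  have : φ.comp (KMmk A) = ψ.comp (KMmk A) := by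
    apply FreeLieAlgebra.hom_ext
    rintro (i | i | i)
    · exact hH i
    · exact hE i
    · exact hF i
  ext x
  obtain ⟨x, rfl⟩ := KMmk_surj A x
  exact congrArg (fun q => q x) this

variable (A) in
/-- The generators generate. -/
theorem KM_span (K : LieSubalgebra ℚ (Matrix.ToLieAlgebra ℚ A)) (hH : ∀ i, gH A i ∈ K)
    (hE : ∀ i, gE A i ∈ K) (hF : ∀ i, gF A i ∈ K) (x) : x ∈ K := by
  let g : FreeLieAlgebra ℚ (Generators B) →ₗ⁅ℚ⁆ K :=
    FreeLieAlgebra.lift ℚ (genFun (fun i => ⟨_, hH i⟩) (fun i => ⟨_, hE i⟩) (fun i => ⟨_, hF i⟩))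
  have : K.incl.comp g = KMmk A := by
    apply FreeLieAlgebra.hom_ext
    rintro (i | i | i) <;> simp [g, FreeLieAlgebra.lift_of_apply, genFun] <;> rfl
  obtain ⟨x, rfl⟩ := KMmk_surj A x
  rw [← this]
  exact (g x).2

end lift

section borel
variable {B : Type*} (A : Matrix B B ℤ)

/-- Generators of the Borel algebra. -/
inductive BGen (B : Type*)
  | h : B → BGen B
  | e : B → BGen B

/-- The relations of the Borel algebra. -/
inductive BRel : FreeAlgebra ℚ (BGen B) → FreeAlgebra ℚ (BGen B) → Prop
  | hh (i j : B) : BRel ⁅FreeAlgebra.ι ℚ (BGen.h i), FreeAlgebra.ι ℚ (BGen.h j)⁆ 0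
  | he (i j : B) : BRel ⁅FreeAlgebra.ι ℚ (BGen.h i), FreeAlgebra.ι ℚ (BGen.e j)⁆
      (A i j • FreeAlgebra.ι ℚ (BGen.e j))
  | se (i j : B) : BRel
      (adp (FreeAlgebra.ι ℚ (BGen.e i)) (sx A i j) (FreeAlgebra.ι ℚ (BGen.e j))) 0

/-- The enveloping algebra of the positive Borel subalgebra. -/
def WAlg := RingQuot (BRel A)

instance : Ring (WAlg A) := inferInstanceAs (Ring (RingQuot (BRel A)))
instance : Algebra ℚ (WAlg A) := inferInstanceAs (Algebra ℚ (RingQuot (BRel A)))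

/-- The quotient map. -/
def Wmk : FreeAlgebra ℚ (BGen B) →ₐ[ℚ] WAlg A := RingQuot.mkAlgHom ℚ (BRel A)

theorem Wmk_surj : Function.Surjective (Wmk A) := RingQuot.mkAlgHom_surjective ℚ (BRel A)

theorem Wmk_rel {x y} (h : BRel A x y) : Wmk A x = Wmk A y := RingQuot.mkAlgHom_rel ℚ h

/-- Generator h. -/
def wh (i : B) : WAlg A := Wmk A (FreeAlgebra.ι ℚ (BGen.h i))
/-- Generator e. -/
def we (i : B) : WAlg A := Wmk A (FreeAlgebra.ι ℚ (BGen.e i))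

/-- relations in an associative algebra -/
structure WRel {R : Type*} [Ring R] (h e : B → R) : Prop where
  hh : ∀ i j, ⁅h i, h j⁆ = 0
  he : ∀ i j, ⁅h i, e j⁆ = A i j • e j
  se : ∀ i j, adp (e i) (sx A i j) (e j) = 0

theorem map_br {R S : Type*} [Ring R] [Algebra ℚ R] [Ring S] [Algebra ℚ S]
    (φ : R →ₐ[ℚ] S) (x y : R) : φ ⁅x, y⁆ = ⁅φ x, φ y⁆ := by
  simp [LieRing.of_associative_ring_bracket]

theorem W_rel : WRel A (wh A) (we A) where
  hh i j := by
    have := Wmk_rel A (BRel.hh (A := A) i j)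
    rwa [map_br, map_zero] at this
  he i j := by
    have := Wmk_rel A (BRel.he (A := A) i j)
    rwa [map_br, map_zsmul] at this
  se i j := by
    have := Wmk_rel A (BRel.se (A := A) i j)
    rwa [map_adp_alg, map_zero] at this

variable {A} {R : Type*} [Ring R] [Algebra ℚ R] {h e : B → R}

/-- map on generators -/
def bgenFun (h e : B → R) : BGen B → R
  | .h i => h i
  | .e i => e i

/-- Universal property of `WAlg`. -/
def Wlift (r : WRel A h e) : WAlg A →ₐ[ℚ] R :=
  RingQuot.liftAlgHom ℚ ⟨FreeAlgebra.lift ℚ (bgenFun h e), by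
    rintro x y (⟨i, j⟩ | ⟨i, j⟩ | ⟨i, j⟩)
    · rw [map_br, map_zero]; simpa [bgenFun] using r.hh i j
    · rw [map_br, map_zsmul]; simpa [bgenFun] using r.he i j
    · rw [map_adp_alg, map_zero]; simpa [bgenFun] using r.se i j⟩

theorem Wlift_mk (r : WRel A h e) (x) :
    Wlift r (Wmk A x) = FreeAlgebra.lift ℚ (bgenFun h e) x :=
  RingQuot.liftAlgHom_mkAlgHom_apply ..

theorem Wlift_h (r : WRel A h e) (i : B) : Wlift r (wh A i) = h i := by
  rw [wh, Wlift_mk]; simp [bgenFun]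
theorem Wlift_e (r : WRel A h e) (i : B) : Wlift r (we A i) = e i := by
  rw [we, Wlift_mk]; simp [bgenFun]

theorem W_ind (P : Submodule ℚ (WAlg A)) (h1 : (1 : WAlg A) ∈ P)
    (hh : ∀ i x, x ∈ P → wh A i * x ∈ P) (he : ∀ i x, x ∈ P → we A i * x ∈ P) (x : WAlg A) :
    x ∈ P := by
  suffices H : ∀ w : WAlg A, ∀ x ∈ P, w * x ∈ P by simpa using H x 1 h1
  intro w
  obtain ⟨w, rfl⟩ := Wmk_surj A w
  induction w using FreeAlgebra.induction with
  | grade0 r =>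
    intro x hx
    rw [AlgHom.commutes, ← Algebra.smul_def]
    exact P.smul_mem _ hx
  | grade1 g =>
    rcases g with i | i
    · exact hh i
    · exact he i
  | mul a b ha hb => intro x hx; rw [map_mul, mul_assoc]; exact ha _ (hb _ hx)
  | add a b ha hb => intro x hx; rw [map_add, add_mul]; exact P.add_mem (ha _ hx) (hb _ hx)

end borel

section verma
variable {B : Type*} [DecidableEq B] {A : Matrix B B ℤ}

/-- Lower triangular block operator with equal diagonal. -/
def blk {W : Type*} [Ring W] [Algebra ℚ W] (a c : W) : Module.End ℚ (W × W) where
  toFun p := (a * p.1, a * p.2 + c * p.1)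
  map_add' p q := by ext <;> simp [mul_add]; abel
  map_smul' t p := by ext <;> simp

theorem blk_lie {W : Type*} [Ring W] [Algebra ℚ W] (a c a' c' : W) :
    ⁅blk a c, blk a' c'⁆ = blk ⁅a, a'⁆ (⁅a, c'⁆ + ⁅c, a'⁆) := by
  refine LinearMap.ext fun p => ?_
  simp only [LieRing.of_associative_ring_bracket, LinearMap.sub_apply, Module.End.mul_apply]
  ext
  · simp [blk]; noncomm_ring
  · simp [blk]; noncomm_ring

theorem blk_zero {W : Type*} [Ring W] [Algebra ℚ W] : blk (0 : W) 0 = 0 := by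
  refine LinearMap.ext fun p => ?_
  ext <;> simp [blk]

/-- Diagonal operator with shift. -/
def dgo {W : Type*} [Ring W] [Algebra ℚ W] (a : W) (t : ℤ) : Module.End ℚ (W × W) where
  toFun p := (a * p.1, a * p.2 + t • p.2)
  map_add' p q := by ext <;> simp [mul_add]; abel
  map_smul' t p := by ext <;> simp [smul_comm]

/-- corner entry -/
def crn (A : Matrix B B ℤ) (i j : B) : WAlg A := if i = j then - wh A i else 0

theorem wh_adp (k i j : B) (n : ℕ) :
    ⁅wh A k, adp (we A i) n (we A j)⁆ = (n * A k i + A k j) • adp (we A i) n (we A j) := by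
  induction n with
  | zero => simp [adp_zero, (W_rel A).he]
  | succ n ih =>
    rw [adp_succ, leibniz_lie, ih, (W_rel A).he, zsmul_lie, lie_zsmul]
    push_cast; module

theorem op_serre (hA : IsGCM A) (i j k : B) :
    adp (blk (we A j) (crn A i j)) (sx A j k) (blk (we A k) (crn A i k)) = 0 := by
  by_cases hjk : j = k
  · subst hjk; rw [sx, adp_self]
  have hs := (W_rel A).se j k
  by_cases hij : i = j
  · subst hij
    have key : ∀ n : ℕ, adp (blk (we A i) (crn A i i)) (n + 1) (blk (we A k) (crn A i k)) =
        blk (adp (we A i) (n + 1) (we A k))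
          (-(((n + 1) * (n + A i k)) • adp (we A i) n (we A k))) := by
      intro n
      induction n with
      | zero => simp [adp_succ, adp_zero, blk_lie, crn, hjk, (W_rel A).he]
      | succ n ih =>
        rw [adp_succ, ih, blk_lie, ← adp_succ]
        congr 1
        simp only [crn, if_true, neg_lie, wh_adp, lie_neg, lie_zsmul, ← adp_succ, hA.1]
        push_cast; module
    have := hA.2.1 i k hjk
    have h2 : (((-A i k).toNat : ℕ) : ℤ) = - A i k := Int.toNat_of_nonneg (by omega)
    rw [sx] at hs ⊢
    rw [key, hs, h2]; simp [blk_zero]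
  by_cases hik : i = k
  · subst hik
    have key : ∀ n : ℕ, adp (blk (we A j) (crn A i j)) (n + 2) (blk (we A i) (crn A i i)) =
        blk (adp (we A j) (n + 2) (we A i)) 0 := by
      intro n
      induction n with
      | zero =>
        simp only [adp_succ, adp_zero, blk_lie, crn, hij, if_true, if_false, zero_lie, add_zero,
          lie_neg]
        rw [← lie_skew (we A j) (wh A i), (W_rel A).he, lie_neg, lie_zsmul, lie_self,
          smul_zero, neg_zero, neg_zero]
      | succ n ih =>
        rw [adp_succ, ih, blk_lie, ← adp_succ]
        simp [crn, hij]
    rcases Nat.eq_zero_or_pos (-A j i).toNat with h0 | h0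
    · have := hA.2.1 j i hjk
      have h1 : A j i = 0 := by omega
      have h2 : A i j = 0 := (hA.2.2 j i).1 h1
      rw [sx, h0] at hs ⊢
      rw [adp_succ, adp_zero] at hs ⊢
      rw [blk_lie, hs, crn, crn, if_neg hij, if_pos rfl, lie_neg, lie_skew, (W_rel A).he, h2]
      simp [blk_zero]
    · obtain ⟨m, hm⟩ := Nat.exists_eq_add_of_lt h0
      rw [sx, hm, show 0 + m + 1 + 1 = m + 2 by ring] at hs ⊢
      rw [key m, hs, blk_zero]
  · have key : ∀ n : ℕ, adp (blk (we A j) (crn A i j)) n (blk (we A k) (crn A i k)) =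
        blk (adp (we A j) n (we A k)) 0 := by
      intro n
      induction n with
      | zero => simp [adp_zero, crn, hik]
      | succ n ih => rw [adp_succ, ih, blk_lie, ← adp_succ]; simp [crn, hij]
    rw [key, hs, blk_zero]

theorem op_rel (hA : IsGCM A) (i : B) :
    WRel A (fun j => dgo (wh A j) (A j i)) (fun j => blk (we A j) (crn A i j)) where
  hh j k := by
    have := (W_rel A).hh j k
    rw [LieRing.of_associative_ring_bracket, sub_eq_zero] at this
    rw [LieRing.of_associative_ring_bracket, sub_eq_zero]
    refine LinearMap.ext fun p => ?_
    simp only [Module.End.mul_apply]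
    ext
    · simp [dgo, ← mul_assoc, this]
    · simp only [dgo, LinearMap.coe_mk, AddHom.coe_mk, mul_add, smul_add, ← mul_assoc, this,
        mul_smul_comm, smul_comm (A j i) (A k i)]
      module
  he j k := by
    have := (W_rel A).he j k
    have hc : ⁅wh A j, crn A i k⁆ = 0 := by
      unfold crn; split_ifs
      · rw [lie_neg, (W_rel A).hh, neg_zero]
      · simp
    rw [LieRing.of_associative_ring_bracket, sub_eq_iff_eq_add] at this hc
    rw [LieRing.of_associative_ring_bracket, sub_eq_iff_eq_add]
    refine LinearMap.ext fun p => ?_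
    simp only [Module.End.mul_apply, LinearMap.add_apply, LinearMap.smul_apply]
    ext
    · simp [dgo, blk, ← mul_assoc, this, add_mul]
    · by_cases hik : i = k
      · subst hik
        simp only [dgo, blk, LinearMap.coe_mk, AddHom.coe_mk, mul_add, smul_add, ← mul_assoc, this,
          hc, mul_smul_comm, Prod.snd_add, Prod.smul_snd, add_mul, smul_mul_assoc, zero_add]
        abel
      · simp only [dgo, blk, LinearMap.coe_mk, AddHom.coe_mk, mul_add, smul_add, ← mul_assoc, this,
          crn, hik, if_false, zero_mul, mul_zero,
          mul_smul_comm, Prod.snd_add, Prod.smul_snd, add_mul, smul_mul_assoc, zero_add]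
        module
  se j k := op_serre hA i j k

/-- The lowering operators on the universal Verma module. -/
def wF (hA : IsGCM A) (i : B) : Module.End ℚ (WAlg A) where
  toFun w := (Wlift (op_rel hA i) w (1, 0)).2
  map_add' := by simp
  map_smul' := by simp

theorem op_fst (hA : IsGCM A) (i : B) (w : WAlg A) :
    (Wlift (op_rel hA i) w (1, 0)).1 = w := by
  let P : Submodule ℚ (WAlg A) :=
    { carrier := {w | (Wlift (op_rel hA i) w (1, 0)).1 = w}
      add_mem' := by intro a b ha hb; simp_all
      zero_mem' := by simp
      smul_mem' := by intro t a ha; simp_all }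
  refine W_ind P ?_ ?_ ?_ w
  · simp [P]
  · intro j x hx
    change (Wlift (op_rel hA i) _ (1, 0)).1 = _
    rw [map_mul, Wlift_h, Module.End.mul_apply]
    change _ * (Wlift (op_rel hA i) x (1, 0)).1 = _
    rw [show (Wlift (op_rel hA i) x (1, 0)).1 = x from hx]
  · intro j x hx
    change (Wlift (op_rel hA i) _ (1, 0)).1 = _
    rw [map_mul, Wlift_e, Module.End.mul_apply]
    change _ * (Wlift (op_rel hA i) x (1, 0)).1 = _
    rw [show (Wlift (op_rel hA i) x (1, 0)).1 = x from hx]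

theorem wF_one (hA : IsGCM A) (i : B) : wF hA i 1 = 0 := by simp [wF]

theorem wF_h (hA : IsGCM A) (i j : B) (w : WAlg A) :
    wF hA i (wh A j * w) = wh A j * wF hA i w + A j i • wF hA i w := by
  change (Wlift (op_rel hA i) _ (1, 0)).2 = _
  rw [map_mul, Wlift_h, Module.End.mul_apply]
  rfl

theorem wF_e (hA : IsGCM A) (i j : B) (w : WAlg A) :
    wF hA i (we A j * w) = we A j * wF hA i w + crn A i j * w := by
  change (Wlift (op_rel hA i) _ (1, 0)).2 = _
  rw [map_mul, Wlift_e, Module.End.mul_apply]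
  change _ + _ * (Wlift (op_rel hA i) w (1, 0)).1 = _
  rw [op_fst hA]
  rfl

theorem W_prerel (hA : IsGCM A) :
    PreRel A (fun i => Algebra.lmul ℚ (WAlg A) (wh A i)) (fun i => Algebra.lmul ℚ (WAlg A) (we A i))
      (wF hA) where
  hh i j := by rw [← map_br, (W_rel A).hh, map_zero]
  he i j := by rw [← map_br, (W_rel A).he, map_zsmul]
  ef i := by
    rw [LieRing.of_associative_ring_bracket]
    refine LinearMap.ext fun w => ?_
    simp [wF_e, crn]
  ef' i j hij := by
    rw [LieRing.of_associative_ring_bracket]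
    refine LinearMap.ext fun w => ?_
    simp [wF_e, crn, hij.symm]
  hf i j := by
    rw [LieRing.of_associative_ring_bracket]
    refine LinearMap.ext fun w => ?_
    simp [wF_h]

theorem W_kmrel (hA : IsGCM A) :
    KMRel A (fun i => Algebra.lmul ℚ (WAlg A) (wh A i)) (fun i => Algebra.lmul ℚ (WAlg A) (we A i))
      (wF hA) where
  toPreRel := W_prerel hA
  se i j := by rw [← map_adp_alg, (W_rel A).se, map_zero]
  sf i j := by
    by_cases hij : i = j
    · subst hij; rw [sx, adp_self]
    have hE := fun k => (W_prerel hA).e_adp_serre hA k i j hij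
    have hH := fun k => (W_prerel hA).h_adp k i j (sx A i j)
    have h1 : ∀ n, adp (wF hA i) n (wF hA j) 1 = 0 := by
      intro n
      induction n with
      | zero => exact wF_one hA j
      | succ n ih =>
        rw [adp_succ, LieRing.of_associative_ring_bracket, LinearMap.sub_apply,
          Module.End.mul_apply, Module.End.mul_apply, ih, wF_one]; simp
    specialize h1 (sx A i j)
    generalize adp (wF hA i) (sx A i j) (wF hA j) = θ at *
    refine LinearMap.ext fun w => ?_
    refine W_ind (LinearMap.ker θ) h1 ?_ ?_ w
    · intro k x hx
      have := congrArg (fun q => q x) (hH k)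
      rw [LinearMap.mem_ker] at hx ⊢
      simpa [LieRing.of_associative_ring_bracket, hx] using this
    · intro k x hx
      have := congrArg (fun q => q x) (hE k)
      rw [LinearMap.mem_ker] at hx ⊢
      simpa [LieRing.of_associative_ring_bracket, hx] using this

end verma

section graded
variable {B : Type*} {L : Type*} [LieRing L] [LieAlgebra ℚ L]

/-- The grading group: weights together with the height. -/
abbrev Gr (B : Type*) := (B → ℚ) × ℚ

/-- The graded adjoint module with a degree element adjoined. -/
abbrev GMod (B L : Type*) [AddCommGroup L] := (Gr B →₀ L) × ℚ

/-- Bracket with `x`, shifting the degree by `γ`. -/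
def tsp (γ : Gr B) (x : L) : (Gr B →₀ L) →ₗ[ℚ] (Gr B →₀ L) :=
  Finsupp.lsum ℚ fun δ => (Finsupp.lsingle (γ + δ)) ∘ₗ (LieAlgebra.ad ℚ L x)

theorem tsp_single (γ δ : Gr B) (x v : L) :
    tsp γ x (Finsupp.single δ v) = Finsupp.single (γ + δ) ⁅x, v⁆ := by
  simp [tsp]

/-- Action of a homogeneous element `x` of degree `γ`. -/
def sp (γ : Gr B) (x : L) : Module.End ℚ (GMod B L) where
  toFun p := (tsp γ x p.1 + (p.2 * γ.2) • Finsupp.single γ x, 0)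
  map_add' p q := by
    ext1
    · simp only [Prod.fst_add, Prod.snd_add, map_add]; module
    · simp
  map_smul' t p := by
    ext1
    · simp only [Prod.smul_fst, Prod.smul_snd, map_smul, RingHom.id_apply, smul_eq_mul]; module
    · simp

theorem sp_inl (γ δ : Gr B) (x v : L) :
    sp γ x (Finsupp.single δ v, 0) = (Finsupp.single (γ + δ) ⁅x, v⁆, 0) := by
  simp [sp, tsp_single]

theorem sp_inr (γ : Gr B) (x : L) :
    sp γ x (0, 1) = (Finsupp.single γ (γ.2 • x), 0) := by
  simp [sp]

theorem GMod_ext {f g : Module.End ℚ (GMod B L)}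
    (h1 : ∀ δ v, f (Finsupp.single δ v, 0) = g (Finsupp.single δ v, 0))
    (h2 : f (0, 1) = g (0, 1)) : f = g := by
  apply LinearMap.prod_ext
  · apply Finsupp.lhom_ext
    intro δ v
    exact h1 δ v
  · apply LinearMap.ext_ring
    exact h2

theorem sp_zero (γ : Gr B) : sp γ (0 : L) = 0 := by
  apply GMod_ext
  · intro δ v; rw [sp_inl]; simp
  · rw [sp_inr]; simp

theorem sp_lie (γ δ : Gr B) (x y : L) : ⁅sp γ x, sp δ y⁆ = sp (γ + δ) ⁅x, y⁆ := by
  rw [LieRing.of_associative_ring_bracket]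
  apply GMod_ext
  · intro η v
    simp only [LinearMap.sub_apply, Module.End.mul_apply, sp_inl, lie_lie, Prod.mk_sub_mk,
      sub_zero, Finsupp.single_sub, add_assoc, add_left_comm δ γ η]
  · simp only [LinearMap.sub_apply, Module.End.mul_apply, sp_inl, sp_inr, Prod.mk_sub_mk,
      sub_zero, lie_smul, add_comm δ γ]
    rw [← Finsupp.single_sub, ← lie_skew x y, Prod.snd_add]
    congr 2
    module

theorem sp_adp (γ δ : Gr B) (x y : L) (n : ℕ) :
    adp (sp γ x) n (sp δ y) = sp (n • γ + δ) (adp x n y) := by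
  induction n with
  | zero => simp [adp_zero]
  | succ n ih => rw [adp_succ, ih, sp_lie, adp_succ]; congr 1; module

/-- The weight operators. -/
def dg (L : Type*) [LieRing L] [LieAlgebra ℚ L] (i : B) : Module.End ℚ (GMod B L) :=
  LinearMap.inl ℚ (Gr B →₀ L) ℚ ∘ₗ
    (Finsupp.lsum ℚ (fun δ : Gr B => (δ.1 i) • Finsupp.lsingle (M := L) (R := ℚ) δ)) ∘ₗ
    LinearMap.fst ℚ (Gr B →₀ L) ℚ

theorem dg_inl (i : B) (δ : Gr B) (v : L) :
    dg L i (Finsupp.single δ v, 0) = (Finsupp.single δ (δ.1 i • v), 0) := by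
  simp [dg]

theorem dg_inr (i : B) : dg L i (0, 1) = 0 := by
  simp [dg]

theorem dg_dg (i j : B) : ⁅dg L i, dg L j⁆ = 0 := by
  rw [LieRing.of_associative_ring_bracket]
  apply GMod_ext
  · intro η v
    simp only [LinearMap.sub_apply, Module.End.mul_apply, dg_inl, smul_comm (η.1 i) (η.1 j),
      sub_self, LinearMap.zero_apply]
  · simp only [LinearMap.sub_apply, Module.End.mul_apply, dg_inr, map_zero, sub_self,
      LinearMap.zero_apply]

theorem dg_sp (i : B) (γ : Gr B) (x : L) : ⁅dg L i, sp γ x⁆ = γ.1 i • sp γ x := by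
  rw [LieRing.of_associative_ring_bracket]
  apply GMod_ext
  · intro η v
    simp only [LinearMap.sub_apply, Module.End.mul_apply, dg_inl, sp_inl, LinearMap.smul_apply,
      Prod.mk_sub_mk, Prod.smul_mk, smul_zero, sub_zero, ← Finsupp.single_sub,
      Finsupp.smul_single, lie_smul, Prod.fst_add, Pi.add_apply]
    congr 2
    module
  · simp only [LinearMap.sub_apply, Module.End.mul_apply, dg_inl, sp_inr, dg_inr, map_zero,
      LinearMap.smul_apply, Prod.smul_mk, smul_zero, sub_zero, Finsupp.smul_single]

/-- The degree of a simple root. -/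
def grd (A : Matrix B B ℤ) (j : B) : Gr B := (fun i => (A i j : ℚ), 1)

theorem G_rel (A : Matrix B B ℤ) (e : B → L) (he : ∀ i j, adp (e i) (sx A i j) (e j) = 0) :
    WRel A (fun i => dg L i) (fun i => sp (grd A i) (e i)) where
  hh := dg_dg
  he i j := by rw [dg_sp]; exact Int.cast_smul_eq_zsmul ℚ (A i j) (sp (grd A j) (e j))
  se i j := by rw [sp_adp, he, sp_zero]

/-- Divide by the height and sum up. -/
def gsum : GMod B L →ₗ[ℚ] L :=
  (Finsupp.lsum ℚ fun γ : Gr B => (γ.2)⁻¹ • LinearMap.id) ∘ₗ LinearMap.fst ℚ _ _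

theorem gsum_sp (γ : Gr B) (hγ : 0 < γ.2) (x : L) : gsum (sp γ x (0, 1)) = x := by
  rw [sp_inr]
  simp [gsum, smul_smul, hγ.ne']

theorem aug_rel [DecidableEq B] (A : Matrix B B ℤ) (k : B) :
    WRel A (R := ℚ) (fun i => if i = k then 1 else 0) (fun _ => 0) where
  hh i j := by rw [LieRing.of_associative_ring_bracket, mul_comm, sub_self]
  he i j := by simp
  se i j := adp_zero_left _ _

end graded

section tri
variable {B : Type*} {A : Matrix B B ℤ} {L : Type*} [LieRing L] [LieAlgebra ℚ L] {h e f : B → L}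

/-- Iterated brackets. -/
inductive Mono (e : B → L) : L → Prop
  | base (j : B) : Mono e (e j)
  | step (j : B) (x : L) : Mono e x → Mono e ⁅e j, x⁆

/-- Span of iterated brackets. -/
def Nsp (e : B → L) : Submodule ℚ L := Submodule.span ℚ {x | Mono e x}

/-- Span of the Cartan part. -/
def Hsp (h : B → L) : Submodule ℚ L := Submodule.span ℚ (Set.range h)

/-- Extend membership from a spanning set. -/
theorem lie_span_mem (u : L) (S : Set L) (V : Submodule ℚ L) (hS : ∀ x ∈ S, ⁅u, x⁆ ∈ V)
    (x : L) (hx : x ∈ Submodule.span ℚ S) : ⁅u, x⁆ ∈ V := by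
  have : Submodule.span ℚ S ≤ V.comap (LieAlgebra.ad ℚ L u) :=
    Submodule.span_le.2 fun x hx => hS x hx
  exact this hx

theorem PreRel.swap (r : PreRel A h e f) : PreRel A (-h) f e where
  hh i j := by simp [r.hh]
  ef i := by rw [← lie_skew, r.ef]; rfl
  ef' i j hij := by rw [← lie_skew, r.ef' j i hij.symm, neg_zero]
  he i j := by rw [Pi.neg_apply, neg_lie, r.hf, neg_neg]
  hf i j := by rw [Pi.neg_apply, neg_lie, r.he]

theorem KMRel.swap (r : KMRel A h e f) : KMRel A (-h) f e where
  toPreRel := r.toPreRel.swap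
  se := r.sf
  sf := r.se

theorem Hsp_neg : Hsp (-h) = Hsp h := by
  apply le_antisymm <;> refine Submodule.span_le.2 ?_ <;> rintro _ ⟨i, rfl⟩
  · exact Submodule.neg_mem _ (Submodule.subset_span ⟨i, rfl⟩)
  · rw [← neg_neg (h i)]
    exact Submodule.neg_mem _ (Submodule.subset_span ⟨i, rfl⟩)

theorem lie_e_Nsp (j : B) (x : L) (hx : x ∈ Nsp e) : ⁅e j, x⁆ ∈ Nsp e :=
  lie_span_mem _ _ _ (fun x hx => Submodule.subset_span (Mono.step j x hx)) x hx

theorem PreRel.h_Mono (r : PreRel A h e f) (i : B) {y : L} (hy : Mono e y) :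
    ∃ c : ℤ, ⁅h i, y⁆ = c • y := by
  induction hy with
  | base j => exact ⟨_, r.he i j⟩
  | step j x _ ih =>
    obtain ⟨c, hc⟩ := ih
    refine ⟨A i j + c, ?_⟩
    rw [leibniz_lie, r.he, hc, zsmul_lie, lie_zsmul, add_smul]

theorem PreRel.h_Nsp (r : PreRel A h e f) (i : B) (y : L) (hy : y ∈ Nsp e) :
    ⁅h i, y⁆ ∈ Nsp e := by
  refine lie_span_mem _ _ _ (fun x hx => ?_) y hy
  obtain ⟨c, hc⟩ := r.h_Mono i hx
  rw [hc]
  exact zsmul_mem (Submodule.subset_span hx) c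

theorem PreRel.e_Hsp (r : PreRel A h e f) (i : B) (y : L) (hy : y ∈ Hsp h) :
    ⁅e i, y⁆ ∈ Nsp e := by
  refine lie_span_mem _ _ _ ?_ y hy
  rintro _ ⟨j, rfl⟩
  rw [← lie_skew, r.he]
  exact neg_mem (zsmul_mem (Submodule.subset_span (Mono.base i)) _)

theorem PreRel.f_Nsp (r : PreRel A h e f) (i : B) (y : L) (hy : y ∈ Nsp e) :
    ⁅f i, y⁆ ∈ Hsp h ⊔ Nsp e := by
  refine lie_span_mem _ _ _ (fun x hx => ?_) y hy
  induction hx with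
  | base j =>
    by_cases hij : i = j
    · subst hij
      rw [← lie_skew, r.ef]
      exact neg_mem (Submodule.mem_sup_left (Submodule.subset_span ⟨i, rfl⟩))
    · rw [← lie_skew, r.ef' j i (Ne.symm hij), neg_zero]
      exact zero_mem _
  | step j x hx ih =>
    rw [leibniz_lie]
    refine add_mem ?_ (Submodule.mem_sup_right ?_)
    · by_cases hij : i = j
      · subst hij
        rw [← lie_skew (f i), r.ef, neg_lie]
        exact neg_mem (Submodule.mem_sup_right (r.h_Nsp i x (Submodule.subset_span hx)))
      · rw [← lie_skew (f i), r.ef' j i (Ne.symm hij), neg_zero, zero_lie]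
        exact zero_mem _
    · obtain ⟨u, hu, v, hv, huv⟩ := Submodule.mem_sup.1 ih
      rw [← huv, lie_add]
      exact add_mem (r.e_Hsp j u hu) (lie_e_Nsp j v hv)

/-- Triangular sum. -/
def Tri (h e f : B → L) : Submodule ℚ L := Nsp f ⊔ (Hsp h ⊔ Nsp e)

theorem PreRel.Tri_swap (_r : PreRel A h e f) : Tri (-h) f e = Tri h e f := by
  rw [Tri, Tri, Hsp_neg, sup_comm, sup_comm (Hsp h) (Nsp f), sup_assoc]

theorem PreRel.f_Tri (r : PreRel A h e f) (i : B) (y : L) (hy : y ∈ Tri h e f) :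
    ⁅f i, y⁆ ∈ Tri h e f := by
  obtain ⟨a, ha, z, hz, rfl⟩ := Submodule.mem_sup.1 hy
  obtain ⟨b, hb, c, hc, rfl⟩ := Submodule.mem_sup.1 hz
  rw [lie_add, lie_add]
  refine add_mem (Submodule.mem_sup_left (lie_e_Nsp i a ha)) (add_mem (Submodule.mem_sup_left ?_)
    (Submodule.mem_sup_right (r.f_Nsp i c hc)))
  rw [← Hsp_neg] at hb
  exact r.swap.e_Hsp i b hb

theorem PreRel.e_Tri (r : PreRel A h e f) (i : B) (y : L) (hy : y ∈ Tri h e f) :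
    ⁅e i, y⁆ ∈ Tri h e f := by
  rw [← r.Tri_swap] at hy ⊢
  exact r.swap.f_Tri i y hy

theorem PreRel.h_Tri (r : PreRel A h e f) (i : B) (y : L) (hy : y ∈ Tri h e f) :
    ⁅h i, y⁆ ∈ Tri h e f := by
  rw [← r.ef i, lie_lie]
  exact sub_mem (r.e_Tri i _ (r.f_Tri i y hy)) (r.f_Tri i _ (r.e_Tri i y hy))

theorem KM_Tri [DecidableEq B] (A : Matrix B B ℤ) (x : Matrix.ToLieAlgebra ℚ A) :
    x ∈ Tri (gH A) (gE A) (gF A) := by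
  have r := (KM_rel A).toPreRel
  set V := Tri (gH A) (gE A) (gF A) with hV
  let K : LieSubalgebra ℚ (Matrix.ToLieAlgebra ℚ A) :=
    { carrier := {u | ∀ y ∈ V, ⁅u, y⁆ ∈ V}
      add_mem' := by intro a b ha hb y hy; rw [add_lie]; exact add_mem (ha y hy) (hb y hy)
      zero_mem' := by intro y hy; rw [zero_lie]; exact zero_mem _
      smul_mem' := by intro t a ha y hy; rw [smul_lie]; exact V.smul_mem t (ha y hy)
      lie_mem' := by
        intro a b ha hb y hy
        rw [lie_lie]; exact sub_mem (ha _ (hb y hy)) (hb _ (ha y hy)) }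
  have hK : ∀ u y, y ∈ V → ⁅u, y⁆ ∈ V := fun u =>
    KM_span A K (fun i => r.h_Tri i) (fun i => r.e_Tri i) (fun i => r.f_Tri i) u
  let K' : LieSubalgebra ℚ (Matrix.ToLieAlgebra ℚ A) :=
    { V with lie_mem' := fun {a b} _ hb => hK a b hb }
  refine KM_span A K' (fun i => ?_) (fun i => ?_) (fun i => ?_) x
  · exact Submodule.mem_sup_right (Submodule.mem_sup_left (Submodule.subset_span ⟨i, rfl⟩))
  · exact Submodule.mem_sup_right (Submodule.mem_sup_right (Submodule.subset_span (Mono.base i)))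
  · exact Submodule.mem_sup_left (Submodule.subset_span (Mono.base i))

theorem map_Mono {L' : Type*} [LieRing L'] [LieAlgebra ℚ L'] (φ : L →ₗ⁅ℚ⁆ L') {e : B → L}
    {e' : B → L'} (he : ∀ i, φ (e i) = e' i) (x : L) (hx : x ∈ Nsp e) : φ x ∈ Nsp e' := by
  have : Nsp e ≤ (Nsp e').comap φ.toLinearMap := by
    refine Submodule.span_le.2 fun x hx => ?_
    refine Submodule.subset_span ?_
    change Mono e' (φ x)
    induction hx with
    | base j => rw [he]; exact Mono.base j
    | step j x _ ih => rw [LieHom.map_lie, he]; exact Mono.step j _ ih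
  exact this hx

end tri

section final
variable {B : Type*} [DecidableEq B] (A : Matrix B B ℤ) (i₀ : B)

/-- The submatrix. -/
abbrev subA : Matrix {j : B // j ≠ i₀} {j : B // j ≠ i₀} ℤ :=
  A.submatrix (Subtype.val : {j : B // j ≠ i₀} → B) Subtype.val

theorem sub_rel : KMRel (subA A i₀) (fun j => gH A j.val) (fun j => gE A j.val)
    (fun j => gF A j.val) where
  hh i j := (KM_rel A).hh _ _
  ef i := (KM_rel A).ef _
  ef' i j hij := (KM_rel A).ef' _ _ (fun h => hij (Subtype.ext h))
  he i j := (KM_rel A).he _ _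
  hf i j := (KM_rel A).hf _ _
  se i j := (KM_rel A).se _ _
  sf i j := (KM_rel A).sf _ _

/-- The map. -/
def subMap : Matrix.ToLieAlgebra ℚ (subA A i₀) →ₗ⁅ℚ⁆ Matrix.ToLieAlgebra ℚ A :=
  KMlift (sub_rel A i₀)

/-- The raising generators of the subalgebra, extended by zero. -/
def eExt (j : B) : Matrix.ToLieAlgebra ℚ (subA A i₀) :=
  if hj : j ≠ i₀ then gE (subA A i₀) ⟨j, hj⟩ else 0

theorem eExt_val (j : {j : B // j ≠ i₀}) : eExt A i₀ j.val = gE (subA A i₀) j := by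
  rw [eExt, dif_pos j.2]

theorem eExt_serre (i j : B) : adp (eExt A i₀ i) (sx A i j) (eExt A i₀ j) = 0 := by
  by_cases hi : i ≠ i₀
  · by_cases hj : j ≠ i₀
    · rw [eExt, eExt, dif_pos hi, dif_pos hj]
      exact (KM_rel (subA A i₀)).se ⟨i, hi⟩ ⟨j, hj⟩
    · rw [eExt, eExt, dif_neg hj, adp_zero_right]
  · rw [eExt, dif_neg hi, sx, adp_zero_left]

variable {A}

/-- The Verma action. -/
def vact (hA : IsGCM A) : Matrix.ToLieAlgebra ℚ A →ₗ⁅ℚ⁆ Module.End ℚ (WAlg A) :=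
  KMlift (W_kmrel hA)

theorem vact_Nsp_f (hA : IsGCM A) (a : Matrix.ToLieAlgebra ℚ (subA A i₀))
    (ha : a ∈ Nsp (gF (subA A i₀))) : vact hA (subMap A i₀ a) 1 = 0 := by
  induction ha using Submodule.span_induction with
  | mem x hx =>
    change Mono _ x at hx
    induction hx with
    | base j => rw [subMap, KMlift_F, vact, KMlift_F, wF_one]
    | step j x _ ih =>
      rw [LieHom.map_lie, LieHom.map_lie, LieRing.of_associative_ring_bracket, LinearMap.sub_apply,
        Module.End.mul_apply, Module.End.mul_apply, ih, subMap, KMlift_F, vact, KMlift_F, wF_one]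
      simp
  | zero => simp
  | add x y _ _ hx hy => rw [map_add, map_add, LinearMap.add_apply, hx, hy, add_zero]
  | smul t x _ hx => rw [map_smul, map_smul, LinearMap.smul_apply, hx, smul_zero]

theorem vact_Nsp_e (hA : IsGCM A) (b : Matrix.ToLieAlgebra ℚ (subA A i₀))
    (hb : b ∈ Nsp (gE (subA A i₀))) : ∃ X : WAlg A,
      vact hA (subMap A i₀ b) = Algebra.lmul ℚ (WAlg A) X ∧
      gsum (Wlift (G_rel A (eExt A i₀) (eExt_serre A i₀)) X (0, 1)) = b ∧
      ∀ k, Wlift (aug_rel A k) X = 0 := by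
  induction hb using Submodule.span_induction with
  | mem x hx =>
    change Mono _ x at hx
    have : ∃ X : WAlg A, vact hA (subMap A i₀ x) = Algebra.lmul ℚ (WAlg A) X ∧
        (∃ γ : Gr B, 0 < γ.2 ∧ Wlift (G_rel A (eExt A i₀) (eExt_serre A i₀)) X = sp γ x) ∧
        ∀ k, Wlift (aug_rel A k) X = 0 := by
      induction hx with
      | base j =>
        refine ⟨we A j.val, ?_, ⟨grd A j.val, one_pos, ?_⟩, fun k => ?_⟩
        · rw [subMap, KMlift_E, vact, KMlift_E]
        · rw [Wlift_e, eExt_val]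
        · rw [Wlift_e]
      | step j x _ ih =>
        obtain ⟨X, h1, ⟨γ, hγ, h2⟩, h3⟩ := ih
        refine ⟨⁅we A j.val, X⁆, ?_, ⟨grd A j.val + γ, add_pos one_pos hγ, ?_⟩, fun k => ?_⟩
        · rw [LieHom.map_lie, LieHom.map_lie, h1, map_br, subMap, KMlift_E, vact, KMlift_E]
        · rw [map_br, Wlift_e, h2, sp_lie, eExt_val]
        · rw [map_br, h3, lie_zero]
    obtain ⟨X, h1, ⟨γ, hγ, h2⟩, h3⟩ := this
    exact ⟨X, h1, by rw [h2, gsum_sp γ hγ], h3⟩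
  | zero => exact ⟨0, by simp, by simp, by simp⟩
  | add x y _ _ hx hy =>
    obtain ⟨X, h1, h2, h3⟩ := hx
    obtain ⟨Y, k1, k2, k3⟩ := hy
    refine ⟨X + Y, ?_, ?_, fun k => ?_⟩
    · rw [map_add, map_add, h1, k1, map_add]
    · rw [map_add, LinearMap.add_apply, map_add, h2, k2]
    · rw [map_add, h3, k3, add_zero]
  | smul t x _ hx =>
    obtain ⟨X, h1, h2, h3⟩ := hx
    refine ⟨t • X, ?_, ?_, fun k => ?_⟩
    · rw [map_smul, map_smul, h1, map_smul]
    · rw [map_smul, LinearMap.smul_apply, map_smul, h2]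
    · rw [map_smul, h3, smul_zero]

theorem ker_step [Fintype B] (hA : IsGCM A) (a h b : Matrix.ToLieAlgebra ℚ (subA A i₀))
    (ha : a ∈ Nsp (gF (subA A i₀))) (hh : h ∈ Hsp (gH (subA A i₀)))
    (hb : b ∈ Nsp (gE (subA A i₀))) (h0 : subMap A i₀ (a + (h + b)) = 0) : h = 0 ∧ b = 0 := by
  obtain ⟨X, h1, h2, h3⟩ := vact_Nsp_e i₀ hA b hb
  obtain ⟨c, rfl⟩ := (Submodule.mem_span_range_iff_exists_fun ℚ).1 hh
  have key : (∑ j, c j • wh A j.val) + X = 0 := by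
    have := congrArg (fun q => vact hA q 1) h0
    simp only [map_add, LinearMap.add_apply, vact_Nsp_f i₀ hA a ha, h1, map_sum, map_smul,
      LinearMap.sum_apply, LinearMap.smul_apply, map_zero, LinearMap.zero_apply] at this
    simpa [subMap, KMlift_H, vact] using this
  have hc : ∀ j, c j = 0 := by
    intro j
    have := congrArg (Wlift (aug_rel A j.val)) key
    rw [map_add, h3, map_zero, map_sum] at this
    simpa [map_smul, Wlift_h, ← Subtype.ext_iff] using this
  have hX : X = 0 := by simpa [hc] using key
  refine ⟨by simp [hc], ?_⟩
  rw [← h2, hX]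
  simp

/-- The Chevalley involution. -/
def chev (A : Matrix B B ℤ) : Matrix.ToLieAlgebra ℚ A →ₗ⁅ℚ⁆ Matrix.ToLieAlgebra ℚ A :=
  KMlift (KM_rel A).swap

theorem chev_chev (A : Matrix B B ℤ) (x : Matrix.ToLieAlgebra ℚ A) : chev A (chev A x) = x := by
  have : (chev A).comp (chev A) = LieHom.id := by
    apply KM_hom_ext <;> intro i <;>
      simp [chev, KMlift_H, KMlift_E, KMlift_F]
  exact congrArg (fun q => q x) this

theorem chev_sub (A : Matrix B B ℤ) (i₀ : B) (x : Matrix.ToLieAlgebra ℚ (subA A i₀)) :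
    subMap A i₀ (chev (subA A i₀) x) = chev A (subMap A i₀ x) := by
  have : (subMap A i₀).comp (chev (subA A i₀)) = (chev A).comp (subMap A i₀) := by
    apply KM_hom_ext <;> intro i <;>
      simp [chev, subMap, KMlift_H, KMlift_E, KMlift_F]
  exact congrArg (fun q => q x) this

theorem subMap_inj [Fintype B] (hA : IsGCM A) : Function.Injective (subMap A i₀) := by
  refine (injective_iff_map_eq_zero _).2 fun x hx => ?_
  obtain ⟨a, ha, z, hz, rfl⟩ := Submodule.mem_sup.1 (KM_Tri (subA A i₀) x)
  obtain ⟨h, hh, b, hb, rfl⟩ := Submodule.mem_sup.1 hz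
  obtain ⟨rfl, rfl⟩ := ker_step i₀ hA a h b ha hh hb hx
  simp only [add_zero] at hx ⊢
  have h1 : chev (subA A i₀) a ∈ Nsp (gE (subA A i₀)) :=
    map_Mono _ (fun i => KMlift_F _ i) a ha
  have h2 := ker_step i₀ hA 0 0 (chev (subA A i₀) a) (zero_mem _) (zero_mem _) h1
    (by rw [zero_add, zero_add, chev_sub, hx, map_zero])
  rw [← chev_chev _ a, h2.2, map_zero]

end final

/-- **Subalgebra embedding from node deletion.** Let `A` be a GCM of size `k`, `i₀` an index
and `A'` the principal submatrix of `A` obtained by deleting row and column `i₀` (indexed by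
`{j // j ≠ i₀}`). Then there is a (well-defined) Lie algebra homomorphism `g(A') → g(A)`
sending each generator of `g(A')` to the same-named generator of `g(A)`, and it is
injective. -/
theorem node_deletion_embedding {k : ℕ} (A : Matrix (Fin k) (Fin k) ℤ) (hA : IsGCM A)
    (i₀ : Fin k) :
    ∃ φ : Matrix.ToLieAlgebra ℚ
            (A.submatrix (Subtype.val : {j : Fin k // j ≠ i₀} → Fin k) Subtype.val) →ₗ⁅ℚ⁆
          Matrix.ToLieAlgebra ℚ A,
      (∀ j : {j : Fin k // j ≠ i₀},
          φ (gH (A.submatrix Subtype.val Subtype.val) j) = gH A j.val) ∧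
      (∀ j : {j : Fin k // j ≠ i₀},
          φ (gE (A.submatrix Subtype.val Subtype.val) j) = gE A j.val) ∧
      (∀ j : {j : Fin k // j ≠ i₀},
          φ (gF (A.submatrix Subtype.val Subtype.val) j) = gF A j.val) ∧
      Function.Injective φ := by
  exact ⟨subMap A i₀, fun j => KMlift_H _ j, fun j => KMlift_E _ j, fun j => KMlift_F _ j,
    subMap_inj i₀ hA⟩
end
end

section
/- Positive levels are generated by level one: let A be a generalized Cartan matrix of size k, fix an index i₀, let D be the level derivation of g(A) with respect to i₀ and g_l its eigenspace with eigenvalue l. Then the Lie subalgebra of g(A) generated by g_1 contains g_l for every integer l ≥ 1; equivalently, that subalgebra equals the sum ⨁_{l≥1} g_l. -/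
noncomputable section

open CartanMatrix

section LevelAux

variable {L : Type*} [LieRing L] [LieAlgebra ℚ L] (D : LieDerivation ℚ L L)

/-- The eigenspace of the derivation. -/
abbrev lvlE (c : ℚ) : Submodule ℚ L := Module.End.eigenspace D.toLinearMap c

/-- The subalgebra generated by an eigenspace. -/
abbrev lvlS (c : ℚ) : LieSubalgebra ℚ L := LieSubalgebra.lieSpan ℚ L (lvlE D c : Set L)

theorem mem_lvlE {c : ℚ} {x : L} : x ∈ lvlE D c ↔ D x = c • x := by
  rw [Module.End.mem_eigenspace_iff]; rfl

theorem lvlE_lie {a b c : ℚ} (h : a + b = c) {x y : L} (hx : x ∈ lvlE D a) (hy : y ∈ lvlE D b) :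
    ⁅x, y⁆ ∈ lvlE D c := by
  rw [mem_lvlE] at *
  rw [LieDerivation.apply_lie_eq_add, hx, hy, ← h, lie_smul, smul_lie, add_smul, add_comm]

theorem lvlE_le_lvlS {c : ℚ} {x : L} (hx : x ∈ lvlE D c) : x ∈ lvlS D c :=
  LieSubalgebra.subset_lieSpan hx

theorem lvlS_zero_stable {c : ℚ} {x y : L} (hx : x ∈ lvlE D 0) (hy : y ∈ lvlS D c) :
    ⁅x, y⁆ ∈ lvlS D c := by
  induction hy using LieSubalgebra.lieSpan_induction with
  | mem y hy => exact lvlE_le_lvlS D (lvlE_lie D (zero_add c) hx hy)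
  | zero => rw [lie_zero]; exact zero_mem _
  | smul r y _ ih => rw [lie_smul]; exact (lvlS D c).smul_mem r ih
  | add y z _ _ h1 h2 => rw [lie_add]; exact add_mem h1 h2
  | lie y z hy hz h1 h2 =>
    rw [leibniz_lie]
    exact add_mem ((lvlS D c).lie_mem h1 hz) ((lvlS D c).lie_mem hy h2)

theorem lvlS_neg_stable {b c : ℚ} (hbc : b + c = 0) {x y : L} (hx : x ∈ lvlE D b)
    (hy : y ∈ lvlS D c) : ⁅x, y⁆ ∈ lvlE D 0 ⊔ (lvlS D c).toSubmodule := by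
  have key : ∀ u ∈ lvlE D 0 ⊔ (lvlS D c).toSubmodule, ∀ v ∈ lvlS D c, ⁅u, v⁆ ∈ lvlS D c := by
    intro u hu v hv
    obtain ⟨p, hp, q, hq, rfl⟩ := Submodule.mem_sup.1 hu
    rw [add_lie]
    exact add_mem (lvlS_zero_stable D hp hv) ((lvlS D c).lie_mem hq hv)
  induction hy using LieSubalgebra.lieSpan_induction with
  | mem y hy => exact Submodule.mem_sup_left (lvlE_lie D hbc hx hy)
  | zero => rw [lie_zero]; exact zero_mem _
  | smul r y _ ih => rw [lie_smul]; exact Submodule.smul_mem _ r ih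
  | add y z _ _ h1 h2 => rw [lie_add]; exact add_mem h1 h2
  | lie y z hy hz h1 h2 =>
    rw [leibniz_lie]
    refine Submodule.mem_sup_right (add_mem (key _ h1 _ hz) ?_)
    rw [← lie_skew]
    exact neg_mem (key _ h2 _ hy)

/-- Triangular decomposition. -/
abbrev lvlP : Submodule ℚ L := (lvlS D 1).toSubmodule ⊔ lvlE D 0 ⊔ (lvlS D (-1)).toSubmodule

theorem lvlP_pos {x : L} (hx : x ∈ lvlS D 1) : x ∈ lvlP D :=
  Submodule.mem_sup_left (Submodule.mem_sup_left hx)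

theorem lvlP_zero {x : L} (hx : x ∈ lvlE D 0) : x ∈ lvlP D :=
  Submodule.mem_sup_left (Submodule.mem_sup_right hx)

theorem lvlP_neg {x : L} (hx : x ∈ lvlS D (-1)) : x ∈ lvlP D :=
  Submodule.mem_sup_right hx

theorem lvlP_stable {x y : L} (hx : x ∈ lvlE D 1 ∨ x ∈ lvlE D 0 ∨ x ∈ lvlE D (-1))
    (hy : y ∈ lvlP D) : ⁅x, y⁆ ∈ lvlP D := by
  obtain ⟨w, hw, n, hn, rfl⟩ := Submodule.mem_sup.1 hy
  obtain ⟨s, hs, z, hz, rfl⟩ := Submodule.mem_sup.1 hw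
  rw [lie_add, lie_add]
  refine add_mem (add_mem ?_ ?_) ?_ <;> rcases hx with hx | hx | hx
  · exact lvlP_pos D ((lvlS D 1).lie_mem (lvlE_le_lvlS D hx) hs)
  · exact lvlP_pos D (lvlS_zero_stable D hx hs)
  · exact (sup_le (fun _ h => lvlP_zero D h) (fun _ h => lvlP_pos D h) :
      lvlE D 0 ⊔ (lvlS D 1).toSubmodule ≤ lvlP D) (lvlS_neg_stable D (by norm_num) hx hs)
  · exact lvlP_pos D (lvlE_le_lvlS D (lvlE_lie D (by norm_num) hx hz))
  · exact lvlP_zero D (lvlE_lie D (by norm_num) hx hz)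
  · exact lvlP_neg D (lvlE_le_lvlS D (lvlE_lie D (by norm_num) hx hz))
  · exact (sup_le (fun _ h => lvlP_zero D h) (fun _ h => lvlP_neg D h) :
      lvlE D 0 ⊔ (lvlS D (-1)).toSubmodule ≤ lvlP D) (lvlS_neg_stable D (by norm_num) hx hn)
  · exact lvlP_neg D (lvlS_zero_stable D hx hn)
  · exact lvlP_neg D ((lvlS D (-1)).lie_mem (lvlE_le_lvlS D hx) hn)

theorem lvlP_top (G : Set L) (hG : LieSubalgebra.lieSpan ℚ L G = ⊤)
    (h : ∀ x ∈ G, x ∈ lvlE D 1 ∨ x ∈ lvlE D 0 ∨ x ∈ lvlE D (-1)) (x : L) : x ∈ lvlP D := by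
  have hst : ∀ x : L, ∀ y ∈ lvlP D, ⁅x, y⁆ ∈ lvlP D := by
    intro x
    have hx : x ∈ LieSubalgebra.lieSpan ℚ L G := by rw [hG]; trivial
    induction hx using LieSubalgebra.lieSpan_induction with
    | mem x hx => exact fun y hy => lvlP_stable D (h x hx) hy
    | zero => intro y _; rw [zero_lie]; exact zero_mem _
    | smul r x _ ih => intro y hy; rw [smul_lie]; exact Submodule.smul_mem _ r (ih y hy)
    | add x z _ _ h1 h2 => intro y hy; rw [add_lie]; exact add_mem (h1 y hy) (h2 y hy)
    | lie x z _ _ h1 h2 =>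
      intro y hy
      rw [lie_lie]
      exact sub_mem (h1 _ (h2 y hy)) (h2 _ (h1 y hy))
  have hx : x ∈ LieSubalgebra.lieSpan ℚ L G := by rw [hG]; trivial
  induction hx using LieSubalgebra.lieSpan_induction with
  | mem x hx =>
    rcases h x hx with h | h | h
    · exact lvlP_pos D (lvlE_le_lvlS D h)
    · exact lvlP_zero D h
    · exact lvlP_neg D (lvlE_le_lvlS D h)
  | zero => exact zero_mem _
  | smul r x _ ih => exact Submodule.smul_mem _ r ih
  | add x z _ _ h1 h2 => exact add_mem h1 h2
  | lie x z _ _ h1 h2 => exact hst _ _ h2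

/-- Sum of the eigenspaces with eigenvalue in a set. -/
abbrev lvlU (s : Set ℚ) : Submodule ℚ L := ⨆ q ∈ s, lvlE D q

theorem lvlE_le_lvlU {s : Set ℚ} {q : ℚ} (hq : q ∈ s) : lvlE D q ≤ lvlU D s :=
  le_iSup₂_of_le q hq le_rfl

theorem lvlU_lie {s : Set ℚ} (hs : ∀ a ∈ s, ∀ b ∈ s, a + b ∈ s) {x y : L}
    (hx : x ∈ lvlU D s) (hy : y ∈ lvlU D s) : ⁅x, y⁆ ∈ lvlU D s := by
  have h1 : ∀ a ∈ s, ∀ u ∈ lvlE D a, lvlU D s ≤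
      (lvlU D s).comap (LieAlgebra.ad ℚ L u : L →ₗ[ℚ] L) := fun a ha u hu =>
    iSup₂_le fun b hb v hv => lvlE_le_lvlU D (hs a ha b hb) (lvlE_lie D rfl hu hv)
  have h2 : lvlU D s ≤ (lvlU D s).comap (LieAlgebra.ad ℚ L y : L →ₗ[ℚ] L) := by
    refine iSup₂_le fun a ha u hu => ?_
    have := h1 a ha u hu hy
    rw [Submodule.mem_comap, LieAlgebra.ad_apply] at this ⊢
    rw [← lie_skew]
    exact neg_mem this
  have := h2 hx
  rw [Submodule.mem_comap, LieAlgebra.ad_apply] at this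
  rw [← lie_skew]
  exact neg_mem this

theorem lvlS_le_lvlU {s : Set ℚ} (hs : ∀ a ∈ s, ∀ b ∈ s, a + b ∈ s) {c : ℚ} (hc : c ∈ s) {x : L}
    (hx : x ∈ lvlS D c) : x ∈ lvlU D s := by
  induction hx using LieSubalgebra.lieSpan_induction with
  | mem x hx => exact lvlE_le_lvlU D hc hx
  | zero => exact zero_mem _
  | smul r x _ ih => exact Submodule.smul_mem _ r ih
  | add x z _ _ h1 h2 => exact add_mem h1 h2
  | lie x z _ _ h1 h2 => exact lvlU_lie D hs h1 h2

theorem lvl_main (G : Set L) (hG : LieSubalgebra.lieSpan ℚ L G = ⊤)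
    (h : ∀ x ∈ G, x ∈ lvlE D 1 ∨ x ∈ lvlE D 0 ∨ x ∈ lvlE D (-1)) (q : ℚ) (hq : 0 < q) {x : L}
    (hx : x ∈ lvlE D q) : x ∈ lvlS D 1 := by
  obtain ⟨w, hw, n, hn, rfl⟩ := Submodule.mem_sup.1 (lvlP_top D G hG h x)
  obtain ⟨s, hs, z, hz, rfl⟩ := Submodule.mem_sup.1 hw
  have hs' : s ∈ lvlU D (Set.Ioi 0) :=
    lvlS_le_lvlU D (fun a ha b hb => Set.mem_Ioi.2 <| add_pos (Set.mem_Ioi.1 ha) (Set.mem_Ioi.1 hb))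
      (Set.mem_Ioi.2 one_pos) hs
  have hn' : n ∈ lvlU D (Set.Iic 0) :=
    lvlS_le_lvlU D (fun a ha b hb => Set.mem_Iic.2 <| add_nonpos (Set.mem_Iic.1 ha) (Set.mem_Iic.1 hb))
      (Set.mem_Iic.2 (by norm_num)) hn
  have hz' : z ∈ lvlU D (Set.Iic 0) := lvlE_le_lvlU D (by simp) hz
  have hx' := lvlE_le_lvlU D (Set.mem_Ioi.2 hq) hx
  have hdis : Disjoint (lvlU D (Set.Ioi 0)) (lvlU D (Set.Iic 0)) :=
    (Module.End.eigenspaces_iSupIndep D.toLinearMap).disjoint_biSup_biSup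
      (Set.disjoint_left.2 fun a ha hb => absurd (Set.mem_Ioi.1 ha) (not_lt.2 (Set.mem_Iic.1 hb)))
  have h0 : z + n = 0 := by
    refine Submodule.disjoint_def.1 hdis _ ?_ (add_mem hz' hn')
    have := sub_mem hx' hs'
    rwa [add_assoc, add_sub_cancel_left] at this
  rw [add_assoc, h0, add_zero]
  exact hs

end LevelAux

theorem KM_generated {k : ℕ} (A : Matrix (Fin k) (Fin k) ℤ) :
    LieSubalgebra.lieSpan ℚ (Matrix.ToLieAlgebra ℚ A) (Set.range (KMgen A)) = ⊤ := by
  let p : FreeLieAlgebra ℚ (Generators (Fin k)) →ₗ⁅ℚ⁆ Matrix.ToLieAlgebra ℚ A :=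
    { toFun := fun x => LieSubmodule.Quotient.mk (N := Relations.toIdeal ℚ A) x
      map_add' := fun _ _ => rfl
      map_smul' := fun _ _ => rfl
      map_lie' := rfl }
  let K := LieSubalgebra.lieSpan ℚ (Matrix.ToLieAlgebra ℚ A) (Set.range (KMgen A))
  let f : FreeLieAlgebra ℚ (Generators (Fin k)) →ₗ⁅ℚ⁆ K :=
    FreeLieAlgebra.lift ℚ fun g => ⟨KMgen A g, LieSubalgebra.subset_lieSpan ⟨g, rfl⟩⟩
  have hf : K.incl.comp f = p := by
    ext g
    simp only [LieHom.comp_apply, f, FreeLieAlgebra.lift_of_apply]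
    rfl
  rw [eq_top_iff]
  intro x _
  obtain ⟨y, rfl⟩ : ∃ y, p y = x := Quotient.exists_rep x
  rw [← hf]
  exact (f y).2

/-- **Positive levels are generated by level one.** Let `A` be a GCM, `i₀` an index and `D`
the level derivation with respect to `i₀`, with eigenspaces `g_l`. Then the Lie subalgebra
of `g(A)` generated by `g₁` contains `g_l` for every `l ≥ 1`, and equals `⨆_{l ≥ 1} g_l`. -/
theorem positive_levels_generated {k : ℕ} (A : Matrix (Fin k) (Fin k) ℤ) (hA : IsGCM A)
    (i₀ : Fin k)
    (D : LieDerivation ℚ (Matrix.ToLieAlgebra ℚ A) (Matrix.ToLieAlgebra ℚ A))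
    (hDe : ∀ i, D (gE A i) = if i = i₀ then gE A i else 0)
    (hDf : ∀ i, D (gF A i) = if i = i₀ then -gF A i else 0)
    (hDh : ∀ i, D (gH A i) = 0) :
    (∀ l : ℤ, 1 ≤ l →
      Module.End.eigenspace D.toLinearMap (l : ℚ) ≤
        (LieSubalgebra.lieSpan ℚ (Matrix.ToLieAlgebra ℚ A)
          (Module.End.eigenspace D.toLinearMap 1 : Set (Matrix.ToLieAlgebra ℚ A))).toSubmodule) ∧
    (LieSubalgebra.lieSpan ℚ (Matrix.ToLieAlgebra ℚ A)
        (Module.End.eigenspace D.toLinearMap 1 : Set (Matrix.ToLieAlgebra ℚ A))).toSubmodule =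
      ⨆ l : {l : ℤ // 1 ≤ l}, Module.End.eigenspace D.toLinearMap ((l : ℤ) : ℚ) := by
  have key : ∀ l : ℤ, 1 ≤ l →
      Module.End.eigenspace D.toLinearMap (l : ℚ) ≤
        (LieSubalgebra.lieSpan ℚ (Matrix.ToLieAlgebra ℚ A)
          (Module.End.eigenspace D.toLinearMap 1 :
            Set (Matrix.ToLieAlgebra ℚ A))).toSubmodule := by
    intro l hl x hx
    refine lvl_main D _ (KM_generated A) ?_ (l : ℚ) (by exact_mod_cast hl) hx
    rintro _ ⟨g, rfl⟩
    simp only [mem_lvlE]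
    cases g with
    | H i => exact Or.inr (Or.inl (by rw [zero_smul]; exact hDh i))
    | E i =>
      by_cases hi : i = i₀
      · exact Or.inl (by rw [one_smul]; exact (hDe i).trans (if_pos hi))
      · exact Or.inr (Or.inl (by rw [zero_smul]; exact (hDe i).trans (if_neg hi)))
    | F i =>
      by_cases hi : i = i₀
      · exact Or.inr (Or.inr (by rw [neg_one_smul]; exact (hDf i).trans (if_pos hi)))
      · exact Or.inr (Or.inl (by rw [zero_smul]; exact (hDf i).trans (if_neg hi)))
  refine ⟨key, le_antisymm ?_ (iSup_le fun l => key l l.2)⟩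
  have hU : lvlU D {q : ℚ | ∃ l : ℤ, 1 ≤ l ∧ (l : ℚ) = q} ≤
      ⨆ l : {l : ℤ // 1 ≤ l}, Module.End.eigenspace D.toLinearMap ((l : ℤ) : ℚ) := by
    refine iSup₂_le ?_
    rintro _ ⟨l, hl, rfl⟩
    exact le_iSup (fun l : {l : ℤ // 1 ≤ l} =>
      Module.End.eigenspace D.toLinearMap ((l : ℤ) : ℚ)) ⟨l, hl⟩
  intro x hx
  refine hU (lvlS_le_lvlU (c := 1) D ?_ ?_ hx)
  · rintro _ ⟨a, ha, rfl⟩ _ ⟨b, hb, rfl⟩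
    exact ⟨a + b, by omega, by push_cast; rfl⟩
  · exact ⟨1, le_rfl, by norm_num⟩
end
end
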